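/- For a TS-module M of finite length the following are equivalent: (1) M is perfect, i.e. M^{T,χ} = 0 for all smooth characters χ of T; (2) M^S = 0; (3) dim M_{T,χ} = deg(M) for all smooth characters χ of T. -/

import Mathlib

noncomputable section

open scoped Classical

namespace PSW

/-! ### The affine group `λ.b : x ↦ λ·x + b` over a field `K`. -/

@[ext]
structure Aff (K : Type*) [Field K] where
  t : Kˣ
  s : K

namespace Aff

variable {K : Type*} [Field K]

instance : Mul (Aff K) := ⟨fun g h => ⟨g.t * h.t, g.s + (g.t : K) * h.s⟩⟩
instance : One (Aff K) := ⟨⟨1, 0⟩⟩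
instance : Inv (Aff K) := ⟨fun g => ⟨g.t⁻¹, -(((g.t⁻¹ : Kˣ) : K) * g.s)⟩⟩

@[simp] lemma mul_t (g h : Aff K) : (g * h).t = g.t * h.t := rfl
@[simp] lemma mul_s (g h : Aff K) : (g * h).s = g.s + (g.t : K) * h.s := rfl
@[simp] lemma one_t : (1 : Aff K).t = 1 := rfl
@[simp] lemma one_s : (1 : Aff K).s = 0 := rfl
@[simp] lemma inv_t (g : Aff K) : (g⁻¹).t = g.t⁻¹ := rfl
@[simp] lemma inv_s (g : Aff K) : (g⁻¹).s = -(((g.t⁻¹ : Kˣ) : K) * g.s) := rfl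

instance : Group (Aff K) where
  mul_assoc a b c := by
    ext
    · simp [mul_assoc]
    · simp only [mul_s, mul_t, Units.val_mul]; ring
  one_mul a := by ext <;> simp
  mul_one a := by ext <;> simp
  inv_mul_cancel a := by
    ext
    · simp
    · simp

/-- The element `x_λ` of the group `TS`. -/
def xT (u : Kˣ) : Aff K := ⟨u, 0⟩

/-- The element `s_b` of the group `TS`. -/
def sS (b : K) : Aff K := ⟨1, b⟩

@[simp] lemma xT_t (u : Kˣ) : (xT u : Aff K).t = u := rfl
@[simp] lemma xT_s (u : Kˣ) : (xT u : Aff K).s = 0 := rfl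
@[simp] lemma sS_t (b : K) : (sS b : Aff K).t = 1 := rfl
@[simp] lemma sS_s (b : K) : (sS b : Aff K).s = b := rfl

/-- `T ≅ k^×` as a subgroup of `TS`. -/
def xTHom : Kˣ →* Aff K where
  toFun := xT
  map_one' := rfl
  map_mul' u v := by ext <;> simp [xT]

@[simp] lemma xTHom_apply (u : Kˣ) : (xTHom u : Aff K) = xT u := rfl

lemma mul_sS (g : Aff K) (b : K) : g * sS b = sS ((g.t : K) * b) * g := by
  ext
  · simp
  · simp [add_comm]

lemma sS_mul (b : K) (g : Aff K) : sS b * g = g * sS (((g.t⁻¹ : Kˣ) : K) * b) := by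
  ext
  · simp
  · simp [Units.mul_inv_cancel_left, add_comm]

lemma aff_decomp (g : Aff K) : g = xT g.t * sS (((g.t⁻¹ : Kˣ) : K) * g.s) := by
  ext
  · simp
  · simp [Units.mul_inv_cancel_left]

instance [TopologicalSpace K] : TopologicalSpace (Aff K) :=
  TopologicalSpace.induced (fun g : Aff K => ((g.t, g.s) : Kˣ × K)) inferInstance

end Aff

/-! ### Generalities on representations of a monoid on complex vector spaces. -/

namespace GRep

variable {G : Type*} [Monoid G]

section MonoidModules

variable {V W : Type*} [AddCommMonoid V] [Module ℂ V] [AddCommMonoid W] [Module ℂ W]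

/-- A submodule invariant under the representation. -/
def Invariant (ρ : Representation ℂ G V) (U : Submodule ℂ V) : Prop :=
  ∀ (g : G) (v : V), v ∈ U → ρ g v ∈ U

/-- Equivariance of a linear map with respect to two representations. -/
def Equivariant (ρ : Representation ℂ G V) (σ : Representation ℂ G W) (f : V →ₗ[ℂ] W) : Prop :=
  ∀ (g : G) (v : V), f (ρ g v) = σ g (f v)

/-- Isomorphism of representations. -/
def Iso (ρ : Representation ℂ G V) (σ : Representation ℂ G W) : Prop :=
  ∃ e : V ≃ₗ[ℂ] W, ∀ (g : G) (v : V), e (ρ g v) = σ g (e v)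

/-- Irreducibility. -/
def Irred (ρ : Representation ℂ G V) : Prop :=
  Nontrivial V ∧ ∀ U : Submodule ℂ V, Invariant ρ U → U = ⊥ ∨ U = ⊤

/-- Subrepresentation on an invariant submodule. -/
def sub (ρ : Representation ℂ G V) {U : Submodule ℂ V} (hU : Invariant ρ U) :
    Representation ℂ G ↥U where
  toFun g := (ρ g).restrict fun v hv => hU g v hv
  map_one' := by
    apply LinearMap.ext; intro v; apply Subtype.ext
    simp [LinearMap.restrict_apply]
  map_mul' g h := by
    apply LinearMap.ext; intro v; apply Subtype.ext
    simp [LinearMap.restrict_apply]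

@[simp] lemma sub_apply (ρ : Representation ℂ G V) {U : Submodule ℂ V} (hU : Invariant ρ U)
    (g : G) (v : ↥U) : ((sub ρ hU g v : ↥U) : V) = ρ g (v : V) := rfl

lemma ker_invariant (ρ : Representation ℂ G V) (σ : Representation ℂ G W)
    (f : V →ₗ[ℂ] W) (hf : Equivariant ρ σ f) : Invariant ρ (LinearMap.ker f) := by
  intro g v hv
  rw [LinearMap.mem_ker] at hv ⊢
  rw [hf g v, hv, map_zero]

lemma range_invariant (ρ : Representation ℂ G V) (σ : Representation ℂ G W)
    (f : V →ₗ[ℂ] W) (hf : Equivariant ρ σ f) : Invariant σ (LinearMap.range f) := by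
  rintro g w ⟨v, rfl⟩
  exact ⟨ρ g v, hf g v⟩

lemma map_invariant (ρ : Representation ℂ G V) (σ : Representation ℂ G W)
    (f : V →ₗ[ℂ] W) (hf : Equivariant ρ σ f) (U : Submodule ℂ V) (hU : Invariant ρ U) :
    Invariant σ (U.map f) := by
  rintro g w ⟨v, hv, rfl⟩
  exact ⟨ρ g v, hU g v hv, hf g v⟩

end MonoidModules

section GroupModules

variable {V W : Type*} [AddCommGroup V] [Module ℂ V] [AddCommGroup W] [Module ℂ W]

/-- Quotient representation. -/
def quot (ρ : Representation ℂ G V) (U : Submodule ℂ V) (hU : Invariant ρ U) :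
    Representation ℂ G (V ⧸ U) where
  toFun g := U.mapQ U (ρ g) fun v hv => hU g v hv
  map_one' := by
    apply LinearMap.ext; intro x
    obtain ⟨v, rfl⟩ := Submodule.Quotient.mk_surjective U x
    simp [Submodule.mapQ_apply]
  map_mul' g h := by
    apply LinearMap.ext; intro x
    obtain ⟨v, rfl⟩ := Submodule.Quotient.mk_surjective U x
    simp [Submodule.mapQ_apply]

@[simp] lemma quot_apply (ρ : Representation ℂ G V) (U : Submodule ℂ V) (hU : Invariant ρ U)
    (g : G) (v : V) :
    quot ρ U hU g (Submodule.Quotient.mk v) = Submodule.Quotient.mk (ρ g v) := rfl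

/-- Subquotient representation on `B/A`. -/
def subquot (ρ : Representation ℂ G V) {A B : Submodule ℂ V}
    (hA : Invariant ρ A) (hB : Invariant ρ B) :
    Representation ℂ G (↥B ⧸ A.comap B.subtype) :=
  quot (sub ρ hB) (A.comap B.subtype) fun g v hv => hA g v.1 hv

lemma mkQ_equivariant (ρ : Representation ℂ G V) (U : Submodule ℂ V) (hU : Invariant ρ U) :
    Equivariant ρ (quot ρ U hU) U.mkQ := by
  intro g v
  show Submodule.Quotient.mk (ρ g v) = quot ρ U hU g (Submodule.Quotient.mk v)
  rw [quot_apply]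

end GroupModules

end GRep

/-! ### TS-modules: representations of the affine group. -/

/-- A `TS`-module structure on `V` is a representation of the group `TS ≅ Gl_a(1)`. -/
abbrev Rep (K : Type*) [Field K] (V : Type*) [AddCommGroup V] [Module ℂ V] :=
  Representation ℂ (Aff K) V

section RepDefs

open Aff

variable {K : Type*} [Field K]
variable {V W : Type*} [AddCommGroup V] [Module ℂ V] [AddCommGroup W] [Module ℂ W]

/-- Smoothness: every vector has open stabilizer. -/
def IsSmoothRep [TopologicalSpace K] (ρ : Rep K V) : Prop :=
  ∀ v : V, IsOpen {g : Aff K | ρ g v = v}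

/-- Smoothness of a `T`-module, i.e. of a representation of `T ≅ k^×`. -/
def TIsSmooth {X : Type*} [AddCommMonoid X] [Module ℂ X] [TopologicalSpace K]
    (τ : Representation ℂ Kˣ X) : Prop :=
  ∀ x : X, IsOpen {u : Kˣ | τ u x = x}

/-- Smooth character of `T ≅ k^×` (open kernel, equivalently locally constant). -/
def SmoothMulChar [TopologicalSpace K] (χ : Kˣ →* ℂˣ) : Prop :=
  IsOpen {u : Kˣ | χ u = 1}

/-- The space `V^S` of `S`-invariants. -/
def sInv (ρ : Rep K V) : Submodule ℂ V where
  carrier := {v | ∀ b : K, ρ (sS b) v = v}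
  zero_mem' := fun b => map_zero _
  add_mem' {a b} ha hb := fun c => by rw [map_add, ha c, hb c]
  smul_mem' c v hv := fun b => by rw [map_smul, hv b]

@[simp] lemma mem_sInv (ρ : Rep K V) (v : V) :
    v ∈ sInv ρ ↔ ∀ b : K, ρ (sS b) v = v := Iff.rfl

/-- The `χ`-eigenspace `X^{T,χ}` of a `T`-module. -/
def tEigenT {X : Type*} [AddCommMonoid X] [Module ℂ X]
    (τ : Representation ℂ Kˣ X) (χ : Kˣ →* ℂˣ) : Submodule ℂ X where
  carrier := {x | ∀ u : Kˣ, τ u x = (χ u : ℂ) • x}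
  zero_mem' := fun u => by simp
  add_mem' {a b} ha hb := fun u => by rw [map_add, ha u, hb u, smul_add]
  smul_mem' c x hx := fun u => by rw [map_smul, hx u]; exact smul_comm c ((χ u : ℂ)) x

@[simp] lemma mem_tEigenT {X : Type*} [AddCommMonoid X] [Module ℂ X]
    (τ : Representation ℂ Kˣ X) (χ : Kˣ →* ℂˣ) (x : X) :
    x ∈ tEigenT τ χ ↔ ∀ u : Kˣ, τ u x = (χ u : ℂ) • x := Iff.rfl

/-- The `χ`-eigenspace `V^{T,χ}` of a `TS`-module. -/
def tEigen (ρ : Rep K V) (χ : Kˣ →* ℂˣ) : Submodule ℂ V := tEigenT (ρ.comp xTHom) χ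

/-- The kernel of the projection to the `S`-coinvariants `V_S`. -/
def sCoinvKer (ρ : Rep K V) : Submodule ℂ V :=
  Submodule.span ℂ {w : V | ∃ (b : K) (v : V), w = ρ (sS b) v - v}

/-- The kernel of the projection to the twisted coinvariants `V_{S,ψ'}`. -/
def sTwistKer (ρ : Rep K V) (ψ' : AddChar K ℂ) : Submodule ℂ V :=
  Submodule.span ℂ {w : V | ∃ (b : K) (v : V), w = ρ (sS b) v - ψ' b • v}

/-- The kernel of the projection to the `χ`-coinvariants `X_{T,χ}` of a `T`-module. -/
def tTwistKerT {X : Type*} [AddCommGroup X] [Module ℂ X]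
    (τ : Representation ℂ Kˣ X) (χ : Kˣ →* ℂˣ) : Submodule ℂ X :=
  Submodule.span ℂ {w : X | ∃ (u : Kˣ) (x : X), w = τ u x - (χ u : ℂ) • x}

/-- The kernel of the projection to the `χ`-coinvariants `V_{T,χ}` of a `TS`-module. -/
def tTwistKer (ρ : Rep K V) (χ : Kˣ →* ℂˣ) : Submodule ℂ V := tTwistKerT (ρ.comp xTHom) χ

lemma sCoinvKer_invariant (ρ : Rep K V) : GRep.Invariant ρ (sCoinvKer ρ) := by
  intro g v hv
  have h : sCoinvKer ρ ≤ Submodule.comap (ρ g) (sCoinvKer ρ) := by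
    refine Submodule.span_le.2 ?_
    rintro w ⟨b, v', rfl⟩
    simp only [SetLike.mem_coe, Submodule.mem_comap, map_sub]
    have h1 : ρ g (ρ (sS b) v') = ρ (sS ((g.t : K) * b)) (ρ g v') := by
      rw [← Module.End.mul_apply, ← map_mul, mul_sS, map_mul, Module.End.mul_apply]
    rw [h1]
    exact Submodule.subset_span ⟨(g.t : K) * b, ρ g v', rfl⟩
  exact h hv

lemma sInv_invariant (ρ : Rep K V) : GRep.Invariant ρ (sInv ρ) := by
  intro g v hv
  rw [mem_sInv] at hv ⊢
  intro b
  have h1 : ρ (sS b) (ρ g v) = ρ g (ρ (sS (((g.t⁻¹ : Kˣ) : K) * b)) v) := by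
    rw [← Module.End.mul_apply, ← map_mul, sS_mul, map_mul, Module.End.mul_apply]
  rw [h1, hv _]

/-- The `S`-coinvariants `π₀(V) = V_S` as a `TS`-module (`S` acting trivially). -/
def piZeroRep (ρ : Rep K V) : Rep K (V ⧸ sCoinvKer ρ) :=
  GRep.quot ρ (sCoinvKer ρ) (sCoinvKer_invariant ρ)

/-- The `S`-coinvariants `π₀(V) = V_S` as a `T`-module. -/
def piZeroT (ρ : Rep K V) : Representation ℂ Kˣ (V ⧸ sCoinvKer ρ) :=
  (piZeroRep ρ).comp xTHom

/-- The `T`-module structure on `κ(V) = V^S`. -/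
def sInvT (ρ : Rep K V) : Representation ℂ Kˣ ↥(sInv ρ) :=
  (GRep.sub ρ (sInv_invariant ρ)).comp xTHom

/-- A `TS`-module is perfect if all its eigenspaces `V^{T,χ}` for smooth `χ` vanish. -/
def Perfect [TopologicalSpace K] (ρ : Rep K V) : Prop :=
  ∀ χ : Kˣ →* ℂˣ, SmoothMulChar χ → tEigen ρ χ = ⊥

/-- A finite-dimensional `T`-module is cyclic if each generalized eigenspace is a single
Jordan block; equivalently all eigenspaces `X^{T,χ}` have dimension at most one. -/
def TCyclic {X : Type*} [AddCommGroup X] [Module ℂ X]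
    (τ : Representation ℂ Kˣ X) : Prop :=
  ∀ χ : Kˣ →* ℂˣ, Module.finrank ℂ ↥(tEigenT τ χ) ≤ 1

lemma sCoinvKer_le_comap (ρ : Rep K V) (σ : Rep K W)
    (f : V →ₗ[ℂ] W) (hf : GRep.Equivariant ρ σ f) :
    sCoinvKer ρ ≤ (sCoinvKer σ).comap f := by
  refine Submodule.span_le.2 ?_
  rintro w ⟨b, v, rfl⟩
  simp only [SetLike.mem_coe, Submodule.mem_comap, map_sub]
  rw [hf]
  exact Submodule.subset_span ⟨b, f v, rfl⟩

/-- The map induced by an equivariant map on the `S`-coinvariants `π₀`. -/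
def piZeroMap (ρ : Rep K V) (σ : Rep K W) (f : V →ₗ[ℂ] W) (hf : GRep.Equivariant ρ σ f) :
    (V ⧸ sCoinvKer ρ) →ₗ[ℂ] (W ⧸ sCoinvKer σ) :=
  Submodule.mapQ _ _ f (sCoinvKer_le_comap ρ σ f hf)

lemma piZeroMap_equivariant (ρ : Rep K V) (σ : Rep K W) (f : V →ₗ[ℂ] W)
    (hf : GRep.Equivariant ρ σ f) :
    GRep.Equivariant (piZeroRep ρ) (piZeroRep σ) (piZeroMap ρ σ f hf) := by
  intro g x
  obtain ⟨v, rfl⟩ := Submodule.Quotient.mk_surjective _ x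
  show piZeroMap ρ σ f hf (piZeroRep ρ g (Submodule.Quotient.mk v))
      = piZeroRep σ g (piZeroMap ρ σ f hf (Submodule.Quotient.mk v))
  rw [show piZeroRep ρ g (Submodule.Quotient.mk v) = Submodule.Quotient.mk (ρ g v) from rfl]
  rw [show piZeroMap ρ σ f hf (Submodule.Quotient.mk v) = Submodule.Quotient.mk (f v) from rfl]
  rw [show piZeroMap ρ σ f hf (Submodule.Quotient.mk (ρ g v))
      = Submodule.Quotient.mk (f (ρ g v)) from rfl]
  rw [show piZeroRep σ g (Submodule.Quotient.mk (f v)) = Submodule.Quotient.mk (σ g (f v)) from rfl]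
  rw [hf]

lemma kappaImg_invariant (ρ : Rep K V) :
    GRep.Invariant (piZeroT ρ) ((sInv ρ).map (sCoinvKer ρ).mkQ) := by
  rintro u w ⟨v, hv, rfl⟩
  refine ⟨ρ (xT u) v, sInv_invariant ρ (xT u) v hv, ?_⟩
  rfl

end RepDefs

/-! ### Composition series and degree. -/

/-- A composition series for a `TS`-module, witnessing finite length: a maximal chain of
invariant submodules (the subquotients are then irreducible). -/
structure CompSeries {K : Type*} [Field K] {V : Type*} [AddCommGroup V] [Module ℂ V]
    (ρ : Rep K V) where
  n : ℕ
  W : ℕ → Submodule ℂ V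
  bot : W 0 = ⊥
  top : W n = ⊤
  inv : ∀ i, GRep.Invariant ρ (W i)
  lt : ∀ i < n, W i < W (i + 1)
  maximal : ∀ i < n, ∀ C : Submodule ℂ V, GRep.Invariant ρ C → W i ≤ C → C ≤ W (i + 1) →
    C = W i ∨ C = W (i + 1)

/-- The number of Jordan–Hölder constituents of a composition series isomorphic to a given
representation `σ` (applied with `σ = 𝕊`, this is the degree). -/
def CompSeries.deg {K : Type*} [Field K] {V : Type*} [AddCommGroup V] [Module ℂ V]
    {ρ : Rep K V} (c : CompSeries ρ) {W₀ : Type*} [AddCommMonoid W₀] [Module ℂ W₀]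
    (σ : Representation ℂ (Aff K) W₀) : ℕ :=
  (Finset.univ.filter fun i : Fin c.n =>
    GRep.Iso (GRep.subquot ρ (c.inv i.1) (c.inv (i.1 + 1))) σ).card

/-! ### Fiber products of a `T`-module with a `TS`-module over a `T`-module. -/

section Fiber

open Aff

variable {K : Type*} [Field K]
variable {X Y E : Type*} [AddCommGroup X] [Module ℂ X] [AddCommGroup Y] [Module ℂ Y]
  [AddCommGroup E] [Module ℂ E]

/-- The product `TS`-module `X × E` where `S` acts trivially on the `T`-module `X`. -/
def prodRepTE (τ : Representation ℂ Kˣ X) (ρ : Rep K E) : Rep K (X × E) where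
  toFun g := (τ g.t).prodMap (ρ g)
  map_one' := by
    apply LinearMap.ext; rintro ⟨x, v⟩
    simp
  map_mul' g h := by
    apply LinearMap.ext; rintro ⟨x, v⟩
    simp [map_mul]

/-- The underlying space of the fiber product `𝔼[f] = X ×_Y E`. -/
def fiberKer (f : X →ₗ[ℂ] Y) (q : E →ₗ[ℂ] Y) : Submodule ℂ (X × E) :=
  LinearMap.ker (f.comp (LinearMap.fst ℂ X E) - q.comp (LinearMap.snd ℂ X E))

lemma mem_fiberKer (f : X →ₗ[ℂ] Y) (q : E →ₗ[ℂ] Y) (p : X × E) :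
    p ∈ fiberKer f q ↔ f p.1 = q p.2 := by
  simp [fiberKer, sub_eq_zero]

lemma fiber_invariant (τX : Representation ℂ Kˣ X) (ρE : Rep K E)
    (τY : Representation ℂ Kˣ Y) (f : X →ₗ[ℂ] Y) (q : E →ₗ[ℂ] Y)
    (hf : ∀ (u : Kˣ) (x : X), f (τX u x) = τY u (f x))
    (hq : sCoinvKer ρE ≤ LinearMap.ker q)
    (hqT : ∀ (u : Kˣ) (v : E), q (ρE (xT u) v) = τY u (q v)) :
    GRep.Invariant (prodRepTE τX ρE) (fiberKer f q) := by
  intro g p hp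
  rw [mem_fiberKer] at hp ⊢
  have hsb : q (ρE (sS (((g.t⁻¹ : Kˣ) : K) * g.s)) p.2) = q p.2 := by
    have h1 : ρE (sS (((g.t⁻¹ : Kˣ) : K) * g.s)) p.2 - p.2 ∈ sCoinvKer ρE :=
      Submodule.subset_span ⟨_, _, rfl⟩
    have h2 := hq h1
    rw [LinearMap.mem_ker, map_sub, sub_eq_zero] at h2
    exact h2
  have hdecomp : ρE g p.2 = ρE (xT g.t) (ρE (sS (((g.t⁻¹ : Kˣ) : K) * g.s)) p.2) := by
    conv_lhs => rw [aff_decomp g]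
    rw [map_mul, Module.End.mul_apply]
  have h1 : ((prodRepTE τX ρE) g p).1 = τX g.t p.1 := rfl
  have h2 : ((prodRepTE τX ρE) g p).2 = ρE g p.2 := rfl
  rw [h1, h2, hf, hp, hdecomp, hqT, hsb]

end Fiber

/-! ### Jordan blocks of finite-dimensional `T`-modules. -/

section Jordan

variable {K : Type*} [Field K]
variable {X : Type*} [AddCommGroup X] [Module ℂ X]

/-- A Jordan block of a `T`-module: a nonzero indecomposable invariant direct summand. -/
def IsJordanBlock (τ : Representation ℂ Kˣ X) (J : Submodule ℂ X) : Prop :=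
  J ≠ ⊥ ∧ GRep.Invariant τ J ∧ (∃ C : Submodule ℂ X, GRep.Invariant τ C ∧ IsCompl J C) ∧
    ∀ A B : Submodule ℂ X, GRep.Invariant τ A → GRep.Invariant τ B → A ≤ J → B ≤ J →
      A ⊓ B = ⊥ → A ⊔ B = J → A = ⊥ ∨ B = ⊥

end Jordan

/-! ### Invariants and coinvariants for a normal subgroup of an arbitrary group. -/

section Grp

variable {Γ : Type*} [Group Γ]
variable {V W : Type*} [AddCommGroup V] [Module ℂ V] [AddCommGroup W] [Module ℂ W]

/-- Invariants `V^N` under a subgroup `N`. -/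
def grpInv (ρ : Representation ℂ Γ V) (N : Subgroup Γ) : Submodule ℂ V where
  carrier := {v | ∀ n ∈ N, ρ n v = v}
  zero_mem' := fun n _ => map_zero _
  add_mem' {a b} ha hb := fun n hn => by rw [map_add, ha n hn, hb n hn]
  smul_mem' c v hv := fun n hn => by rw [map_smul, hv n hn]

@[simp] lemma mem_grpInv (ρ : Representation ℂ Γ V) (N : Subgroup Γ) (v : V) :
    v ∈ grpInv ρ N ↔ ∀ n ∈ N, ρ n v = v := Iff.rfl

/-- The kernel of the projection to the coinvariants `V_N` under a subgroup `N`. -/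
def grpCoinvKer (ρ : Representation ℂ Γ V) (N : Subgroup Γ) : Submodule ℂ V :=
  Submodule.span ℂ {w : V | ∃ n ∈ N, ∃ v : V, w = ρ n v - v}

lemma grpInv_invariant (ρ : Representation ℂ Γ V) (N : Subgroup Γ) [hN : N.Normal] :
    GRep.Invariant ρ (grpInv ρ N) := by
  intro γ v hv
  rw [mem_grpInv] at hv ⊢
  intro n hn
  have hmem : γ⁻¹ * n * γ ∈ N := by
    have := hN.conj_mem n hn γ⁻¹
    simpa using this
  have key : ρ n (ρ γ v) = ρ γ (ρ (γ⁻¹ * n * γ) v) := by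
    rw [← Module.End.mul_apply, ← map_mul, ← Module.End.mul_apply, ← map_mul]
    congr 1
    group
  rw [key, hv _ hmem]

lemma grpCoinvKer_invariant (ρ : Representation ℂ Γ V) (N : Subgroup Γ) [hN : N.Normal] :
    GRep.Invariant ρ (grpCoinvKer ρ N) := by
  intro γ v hv
  have h : grpCoinvKer ρ N ≤ Submodule.comap (ρ γ) (grpCoinvKer ρ N) := by
    refine Submodule.span_le.2 ?_
    rintro w ⟨n, hn, v', rfl⟩
    simp only [SetLike.mem_coe, Submodule.mem_comap, map_sub]
    have key : ρ γ (ρ n v') = ρ (γ * n * γ⁻¹) (ρ γ v') := by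
      rw [← Module.End.mul_apply, ← map_mul, ← Module.End.mul_apply, ← map_mul]
      congr 1
      group
    rw [key]
    exact Submodule.subset_span ⟨γ * n * γ⁻¹, hN.conj_mem n hn γ, ρ γ v', rfl⟩
  exact h hv

/-- The map induced on `N`-invariants by an equivariant map. -/
def grpInvRestrict (ρ : Representation ℂ Γ V) (σ : Representation ℂ Γ W) (N : Subgroup Γ)
    (f : V →ₗ[ℂ] W) (hf : GRep.Equivariant ρ σ f) : ↥(grpInv ρ N) →ₗ[ℂ] ↥(grpInv σ N) :=
  f.restrict (fun v hv => by
    rw [mem_grpInv] at hv ⊢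
    intro n hn
    rw [← hf n v, hv n hn])

lemma grpCoinvKer_le_comap (ρ : Representation ℂ Γ V) (σ : Representation ℂ Γ W) (N : Subgroup Γ)
    (f : V →ₗ[ℂ] W) (hf : GRep.Equivariant ρ σ f) :
    grpCoinvKer ρ N ≤ (grpCoinvKer σ N).comap f := by
  refine Submodule.span_le.2 ?_
  rintro w ⟨n, hn, v, rfl⟩
  simp only [SetLike.mem_coe, Submodule.mem_comap, map_sub]
  rw [hf]
  exact Submodule.subset_span ⟨n, hn, f v, rfl⟩

/-- The map induced on `N`-coinvariants by an equivariant map. -/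
def grpCoinvMap (ρ : Representation ℂ Γ V) (σ : Representation ℂ Γ W) (N : Subgroup Γ)
    (f : V →ₗ[ℂ] W) (hf : GRep.Equivariant ρ σ f) :
    (V ⧸ grpCoinvKer ρ N) →ₗ[ℂ] (W ⧸ grpCoinvKer σ N) :=
  Submodule.mapQ _ _ f (grpCoinvKer_le_comap ρ σ N f hf)

end Grp

/-! ### Tate L-factors of finite-dimensional `T`-modules. -/

section Lfactor

variable {K : Type*} [NontriviallyNormedField K]
variable {X : Type*} [AddCommGroup X] [Module ℂ X]

/-- The part of a `T`-module where the `χ`-twisted action is unramified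
(trivial on the norm-one units). -/
def unrPart (τ : Representation ℂ Kˣ X) (χ : Kˣ →* ℂˣ) : Submodule ℂ X where
  carrier := {x | ∀ u : Kˣ, ‖(u : K)‖ = 1 → (χ u : ℂ) • τ u x = x}
  zero_mem' := fun u _ => by simp
  add_mem' {a b} ha hb := fun u hu => by rw [map_add, smul_add, ha u hu, hb u hu]
  smul_mem' c x hx := fun u hu => by
    rw [map_smul, smul_comm, hx u hu]

lemma unrPart_stable (τ : Representation ℂ Kˣ X) (χ : Kˣ →* ℂˣ) (ϖ : Kˣ) :
    ∀ x ∈ unrPart τ χ, ((χ ϖ : ℂ) • τ ϖ) x ∈ unrPart τ χ := by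
  intro x hx u hu
  have comm : τ u (τ ϖ x) = τ ϖ (τ u x) := by
    rw [← Module.End.mul_apply, ← map_mul, mul_comm, map_mul, Module.End.mul_apply]
  calc (χ u : ℂ) • τ u (((χ ϖ : ℂ) • τ ϖ) x)
      = (χ ϖ : ℂ) • ((χ u : ℂ) • τ u (τ ϖ x)) := by
        rw [LinearMap.smul_apply, map_smul, smul_comm]
    _ = (χ ϖ : ℂ) • τ ϖ ((χ u : ℂ) • τ u x) := by rw [comm, map_smul]
    _ = ((χ ϖ : ℂ) • τ ϖ) x := by rw [hx u hu, LinearMap.smul_apply]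

/-- The twisted uniformizer action on the unramified part. -/
def twistOp (τ : Representation ℂ Kˣ X) (χ : Kˣ →* ℂˣ) (ϖ : Kˣ) :
    ↥(unrPart τ χ) →ₗ[ℂ] ↥(unrPart τ χ) :=
  LinearMap.restrict ((χ ϖ : ℂ) • τ ϖ) (unrPart_stable τ χ ϖ)

/-- The Tate `L`-factor `L(s, χ ⊗ X) = det(1 - q^{-s}·(χ·τ)(ϖ) | X^{unr,χ})⁻¹` of a
(finite-dimensional) `T`-module `X`, relative to a uniformizer `ϖ`. -/
def Lfactor (τ : Representation ℂ Kˣ X) (χ : Kˣ →* ℂˣ) (ϖ : Kˣ) (s : ℂ) : ℂ :=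
  (LinearMap.det (LinearMap.id - (‖(ϖ : K)‖ : ℂ) ^ s • twistOp τ χ ϖ))⁻¹

end Lfactor

/-! ### The concrete `TS`-modules `𝕊`, `C_c^∞(k)`, `C_b^∞(k^×)` and `𝔼[χ]`. -/

section Concrete

open Aff

variable (K : Type*) [NontriviallyNormedField K]

/-- The representation of `TS` on functions on `k^×`:
`(s_b g)(x) = ψ(bx) g(x)`, `(x_λ g)(x) = g(xλ)`. -/
def repCx (ψ : AddChar K ℂ) : Rep K (Kˣ → ℂ) where
  toFun g :=
    { toFun := fun f x => ψ (g.s * (x : K)) * f (x * g.t)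
      map_add' := fun f₁ f₂ => by funext x; simp [mul_add]
      map_smul' := fun c f => by
        funext x
        simp only [Pi.smul_apply, smul_eq_mul, RingHom.id_apply]
        ring }
  map_one' := by
    apply LinearMap.ext; intro f; funext x
    simp
  map_mul' g h := by
    apply LinearMap.ext; intro f; funext x
    show ψ ((g.s + (g.t : K) * h.s) * (x : K)) * f (x * (g.t * h.t))
        = ψ (g.s * (x : K)) * (ψ (h.s * ((x * g.t : Kˣ) : K)) * f (x * g.t * h.t))
    have harg : (g.s + (g.t : K) * h.s) * (x : K)
        = g.s * (x : K) + h.s * ((x * g.t : Kˣ) : K) := by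
      push_cast
      ring
    rw [harg, AddChar.map_add_eq_mul, ← mul_assoc x g.t h.t]
    ring

@[simp] lemma repCx_apply (ψ : AddChar K ℂ) (g : Aff K) (f : Kˣ → ℂ) (x : Kˣ) :
    repCx K ψ g f x = ψ (g.s * (x : K)) * f (x * g.t) := rfl

/-- The `χ`-twisted representation of `TS` on functions on `k`:
`(s_b g)(x) = ψ(bx) g(x)`, `(x_λ g)(x) = χ(λ) g(xλ)`.  (Take `χ = 1` for the
untwisted action on `C_c^∞(k)`; the module `𝔼[χ]` is `C_c^∞(k)` with the twisted action.) -/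
def repCc (ψ : AddChar K ℂ) (χ : Kˣ →* ℂˣ) : Rep K (K → ℂ) where
  toFun g :=
    { toFun := fun f x => (χ g.t : ℂ) * ψ (g.s * x) * f (x * (g.t : K))
      map_add' := fun f₁ f₂ => by funext x; simp [mul_add]
      map_smul' := fun c f => by
        funext x
        simp only [Pi.smul_apply, smul_eq_mul, RingHom.id_apply]
        ring }
  map_one' := by
    apply LinearMap.ext; intro f; funext x
    simp
  map_mul' g h := by
    apply LinearMap.ext; intro f; funext x
    show (χ (g.t * h.t) : ℂ) * ψ ((g.s + (g.t : K) * h.s) * x) * f (x * ((g.t * h.t : Kˣ) : K))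
        = (χ g.t : ℂ) * ψ (g.s * x) * ((χ h.t : ℂ) * ψ (h.s * (x * (g.t : K)))
            * f (x * (g.t : K) * (h.t : K)))
    have harg : (g.s + (g.t : K) * h.s) * x = g.s * x + h.s * (x * (g.t : K)) := by ring
    have harg2 : x * ((g.t * h.t : Kˣ) : K) = x * (g.t : K) * (h.t : K) := by
      push_cast
      ring
    rw [harg, harg2, AddChar.map_add_eq_mul, map_mul]
    push_cast
    ring

@[simp] lemma repCc_apply (ψ : AddChar K ℂ) (χ : Kˣ →* ℂˣ) (g : Aff K) (f : K → ℂ) (x : K) :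
    repCc K ψ χ g f x = (χ g.t : ℂ) * ψ (g.s * x) * f (x * (g.t : K)) := rfl

/-- The one-dimensional `TS`-module `ℂ_χ` on which `S` acts trivially and `x_λ` by `χ(λ)`. -/
def chiRep (χ : Kˣ →* ℂˣ) : Rep K ℂ where
  toFun g := (χ g.t : ℂ) • LinearMap.id
  map_one' := by
    apply LinearMap.ext; intro c
    simp
  map_mul' g h := by
    apply LinearMap.ext; intro c
    simp only [mul_t, map_mul, LinearMap.smul_apply, LinearMap.id_apply, Module.End.mul_apply,
      Units.val_mul, smul_eq_mul]
    ring

/-- `C_c^∞(k)`: locally constant, compactly supported functions on `k`. -/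
def CcK : Submodule ℂ (K → ℂ) where
  carrier := {f | IsLocallyConstant f ∧ HasCompactSupport f}
  zero_mem' := ⟨IsLocallyConstant.const 0, by
    rw [hasCompactSupport_def]
    simp⟩
  add_mem' {a b} ha hb := ⟨ha.1.comp₂ hb.1 (· + ·), ha.2.add hb.2⟩
  smul_mem' c f hf := by
    refine ⟨?_, hf.2.mono (Function.support_const_smul_subset c f)⟩
    exact hf.1.comp (fun z => c * z)

@[simp] lemma mem_CcK (f : K → ℂ) :
    f ∈ CcK K ↔ IsLocallyConstant f ∧ HasCompactSupport f := Iff.rfl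

/-- `𝕊 = C_c^∞(k^×)`: locally constant, compactly supported functions on `k^×`. -/
def SSx : Submodule ℂ (Kˣ → ℂ) where
  carrier := {f | IsLocallyConstant f ∧ HasCompactSupport f}
  zero_mem' := ⟨IsLocallyConstant.const 0, by
    rw [hasCompactSupport_def]
    simp⟩
  add_mem' {a b} ha hb := ⟨ha.1.comp₂ hb.1 (· + ·), ha.2.add hb.2⟩
  smul_mem' c f hf := by
    refine ⟨?_, hf.2.mono (Function.support_const_smul_subset c f)⟩
    exact hf.1.comp (fun z => c * z)

@[simp] lemma mem_SSx (f : Kˣ → ℂ) :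
    f ∈ SSx K ↔ IsLocallyConstant f ∧ HasCompactSupport f := Iff.rfl

/-- `C_b^∞(k^×)`: locally constant functions on `k^×` whose support has compact closure
in `k`. -/
def Cb : Submodule ℂ (Kˣ → ℂ) where
  carrier := {f | IsLocallyConstant f ∧
    IsCompact (closure (((↑) : Kˣ → K) '' Function.support f))}
  zero_mem' := ⟨IsLocallyConstant.const 0, by simp⟩
  add_mem' {a b} ha hb := by
    refine ⟨ha.1.comp₂ hb.1 (· + ·), ?_⟩
    refine IsCompact.of_isClosed_subset (ha.2.union hb.2) isClosed_closure ?_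
    refine closure_minimal ?_ (ha.2.isClosed.union hb.2.isClosed)
    refine (Set.image_mono (Function.support_add _ _)).trans ?_
    rw [Set.image_union]
    exact Set.union_subset_union subset_closure subset_closure
  smul_mem' c f hf := by
    refine ⟨hf.1.comp (fun z => c * z), ?_⟩
    refine IsCompact.of_isClosed_subset hf.2 isClosed_closure ?_
    refine closure_mono ?_
    exact Set.image_mono (Function.support_const_smul_subset c f)

@[simp] lemma mem_Cb (f : Kˣ → ℂ) :
    f ∈ Cb K ↔ IsLocallyConstant f ∧
      IsCompact (closure (((↑) : Kˣ → K) '' Function.support f)) := Iff.rfl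

variable {K}

lemma SSx_invariant (ψ : AddChar K ℂ) (hψlc : IsLocallyConstant (⇑ψ)) :
    GRep.Invariant (repCx K ψ) (SSx K) := by
  rintro g f hf
  rw [mem_SSx] at hf ⊢
  obtain ⟨hlc, hcs⟩ := hf
  have heq : repCx K ψ g f
      = (fun x : Kˣ => ψ (g.s * (x : K))) * (f ∘ (Homeomorph.mulRight g.t)) := rfl
  constructor
  · rw [heq]
    refine IsLocallyConstant.mul ?_ ?_
    · exact hψlc.comp_continuous (continuous_const.mul Units.continuous_val)
    · exact hlc.comp_continuous (Homeomorph.mulRight g.t).continuous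
  · rw [heq]
    exact (hcs.comp_homeomorph (Homeomorph.mulRight g.t)).mul_left

lemma CcK_invariant (ψ : AddChar K ℂ) (hψlc : IsLocallyConstant (⇑ψ)) (χ : Kˣ →* ℂˣ) :
    GRep.Invariant (repCc K ψ χ) (CcK K) := by
  rintro g f hf
  rw [mem_CcK] at hf ⊢
  obtain ⟨hlc, hcs⟩ := hf
  have hne : ((g.t : Kˣ) : K) ≠ 0 := g.t.ne_zero
  have heq : repCc K ψ χ g f
      = (fun x : K => (χ g.t : ℂ) * ψ (g.s * x)) * (f ∘ (Homeomorph.mulRight₀ (g.t : K) hne)) :=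
    rfl
  constructor
  · rw [heq]
    refine IsLocallyConstant.mul ?_ ?_
    · exact ((hψlc.comp_continuous (continuous_const.mul continuous_id)).comp
        (fun z => (χ g.t : ℂ) * z))
    · exact hlc.comp_continuous (Homeomorph.mulRight₀ (g.t : K) hne).continuous
  · rw [heq]
    exact (hcs.comp_homeomorph (Homeomorph.mulRight₀ (g.t : K) hne)).mul_left

/-- The `TS`-module `𝕊 = C_c^∞(k^×)`. -/
def SRep (ψ : AddChar K ℂ) (hψlc : IsLocallyConstant (⇑ψ)) : Rep K ↥(SSx K) :=
  GRep.sub (repCx K ψ) (SSx_invariant ψ hψlc)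

/-- The `TS`-module `𝔼[χ]`, i.e. `C_c^∞(k)` with the `χ`-twisted action. -/
def ERep (ψ : AddChar K ℂ) (hψlc : IsLocallyConstant (⇑ψ)) (χ : Kˣ →* ℂˣ) : Rep K ↥(CcK K) :=
  GRep.sub (repCc K ψ χ) (CcK_invariant ψ hψlc χ)

/-- The `TS`-module `𝕊^s`, a direct sum of `s` copies of `𝕊`. -/
def SRepPow (ψ : AddChar K ℂ) (hψlc : IsLocallyConstant (⇑ψ)) (s : ℕ) :
    Rep K (Fin s → ↥(SSx K)) where
  toFun g := LinearMap.pi fun i => (SRep ψ hψlc g).comp (LinearMap.proj i)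
  map_one' := by
    apply LinearMap.ext; intro v; funext i
    simp
  map_mul' g h := by
    apply LinearMap.ext; intro v; funext i
    simp [map_mul]

/-- The submodule `E` of `C_b^∞(k^×)` consisting of functions which are `χ`-eigenvectors
modulo `𝕊`; the quotient `E/𝕊` is the `χ`-eigenspace of `C_b^∞(k^×)/𝕊`. -/
def quotEigen (ψ : AddChar K ℂ) (χ : Kˣ →* ℂˣ) : Submodule ℂ (Kˣ → ℂ) where
  carrier := {f | f ∈ Cb K ∧ ∀ u : Kˣ, repCx K ψ (Aff.xT u) f - (χ u : ℂ) • f ∈ SSx K}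
  zero_mem' := ⟨(Cb K).zero_mem, fun u => by simpa using (SSx K).zero_mem⟩
  add_mem' {a b} ha hb := by
    refine ⟨(Cb K).add_mem ha.1 hb.1, fun u => ?_⟩
    rw [map_add, smul_add, add_sub_add_comm]
    exact (SSx K).add_mem (ha.2 u) (hb.2 u)
  smul_mem' c f hf := by
    refine ⟨(Cb K).smul_mem c hf.1, fun u => ?_⟩
    rw [map_smul, smul_comm, ← smul_sub]
    exact (SSx K).smul_mem c (hf.2 u)

/-- Evaluation at `0 ∈ k`, realizing the quotient map `𝔼[χ] → ℂ_χ` with kernel `𝕊`. -/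
def ev0 : ↥(CcK K) →ₗ[ℂ] ℂ where
  toFun f := (f : K → ℂ) 0
  map_add' f g := rfl
  map_smul' c f := rfl

end Concrete

/-! ### The diagonal torus in GL(2). -/

section GL2

variable {K : Type*} [Field K]

/-- The diagonal element `diag(a, b)` of `GL(2, K)`. -/
def diagGL (a b : Kˣ) : Matrix.GeneralLinearGroup (Fin 2) K where
  val := Matrix.diagonal ![(a : K), (b : K)]
  inv := Matrix.diagonal ![((a : K))⁻¹, ((b : K))⁻¹]
  val_inv := by
    ext i j
    fin_cases i <;> fin_cases j <;>
      simp [Matrix.mul_apply, Fin.sum_univ_two, Matrix.diagonal, Matrix.one_apply,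
        a.ne_zero, b.ne_zero]
  inv_val := by
    ext i j
    fin_cases i <;> fin_cases j <;>
      simp [Matrix.mul_apply, Fin.sum_univ_two, Matrix.diagonal, Matrix.one_apply,
        a.ne_zero, b.ne_zero]

end GL2

section Part1

/-- finite average -/
def avgSum {G : Type*} [CommGroup G] {V : Type*} [AddCommGroup V] [Module ℂ V]
    (τ : Representation ℂ G V) (H : Subgroup G) [Fintype (G ⧸ H)] (v : V) : V :=
  ∑ q : G ⧸ H, τ q.out v

def gInv {G : Type*} [CommGroup G] {V : Type*} [AddCommGroup V] [Module ℂ V]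
    (τ : Representation ℂ G V) : Submodule ℂ V where
  carrier := {v | ∀ g, τ g v = v}
  zero_mem' := fun b => map_zero _
  add_mem' {a b} ha hb := fun c => by rw [map_add, ha c, hb c]
  smul_mem' c v hv := fun b => by rw [map_smul, hv b]

def gCo {G : Type*} [CommGroup G] {V : Type*} [AddCommGroup V] [Module ℂ V]
    (τ : Representation ℂ G V) : Submodule ℂ V :=
  Submodule.span ℂ {w : V | ∃ g v, w = τ g v - v}

section
variable {G : Type*} [CommGroup G] {V : Type*} [AddCommGroup V] [Module ℂ V]
    (τ : Representation ℂ G V) (H : Subgroup G) [Fintype (G ⧸ H)]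

lemma avgSum_inv (v : V) (hv : ∀ h ∈ H, τ h v = v) (g : G) :
    τ g (avgSum τ H v) = avgSum τ H v := by
  unfold avgSum
  rw [map_sum]
  refine Fintype.sum_equiv (MulAction.toPerm (g : G)) _ _ ?_
  intro q
  have h1 : (((g * q.out : G)) : G ⧸ H) = ((MulAction.toPerm g q).out : G) := by
    rw [QuotientGroup.out_eq', MulAction.toPerm_apply]
    conv_rhs => rw [← QuotientGroup.out_eq' q]
    rfl
  rw [QuotientGroup.eq] at h1
  have h2 := hv _ h1
  have h3 : τ (g * q.out) (τ ((g * q.out)⁻¹ * ((MulAction.toPerm g q).out : G)) v)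
      = τ (g * q.out) v := by rw [h2]
  rw [← Module.End.mul_apply, ← map_mul, mul_inv_cancel_left] at h3
  rw [h3, map_mul, Module.End.mul_apply]

lemma avgSum_sub_mem (v : V) : avgSum τ H v - (Fintype.card (G ⧸ H) : ℂ) • v ∈ gCo τ := by
  have : avgSum τ H v - (Fintype.card (G ⧸ H) : ℂ) • v = ∑ q : G ⧸ H, (τ q.out v - v) := by
    simp [avgSum, Finset.sum_sub_distrib, Nat.cast_smul_eq_nsmul]
  rw [this]
  exact Submodule.sum_mem _ fun q _ => Submodule.subset_span ⟨_, _, rfl⟩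

lemma avgSum_eq_zero_of_gen (g : G) (w : V) (hw : ∀ h ∈ H, τ h w = w) :
    avgSum τ H (τ g w - w) = 0 := by
  have h1 : avgSum τ H (τ g w - w) = τ g (avgSum τ H w) - avgSum τ H w := by
    unfold avgSum
    rw [map_sum, ← Finset.sum_sub_distrib]
    refine Finset.sum_congr rfl fun q _ => ?_
    rw [map_sub, ← Module.End.mul_apply, ← map_mul, mul_comm, map_mul, Module.End.mul_apply]
  rw [h1, avgSum_inv τ H w hw, sub_self]
end

section
variable {G : Type*} [CommGroup G] [TopologicalSpace G] [IsTopologicalGroup G] [CompactSpace G]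
  {V : Type*} [AddCommGroup V] [Module ℂ V]
    (τ : Representation ℂ G V)

def gStab {G : Type*} [CommGroup G] {V : Type*} [AddCommGroup V] [Module ℂ V]
    (τ : Representation ℂ G V) (v : V) : Subgroup G where
  carrier := {g | τ g v = v}
  one_mem' := by simp
  mul_mem' {a b} ha hb := by
    simp only [Set.mem_ofPred_eq] at *
    rw [map_mul, Module.End.mul_apply, hb, ha]
  inv_mem' {a} ha := by
    simp only [Set.mem_ofPred_eq] at *
    conv_lhs => rw [← ha]
    rw [← Module.End.mul_apply, ← map_mul]; simp

lemma gDecomp (hτ : ∀ v, IsOpen {g | τ g v = v}) (v : V) : ∃ a ∈ gInv τ, v - a ∈ gCo τ := by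
  have : Finite (G ⧸ gStab τ v) := Subgroup.quotient_finite_of_isOpen _ (hτ v)
  have : Fintype (G ⧸ gStab τ v) := Fintype.ofFinite _
  have hc : (Fintype.card (G ⧸ gStab τ v) : ℂ) ≠ 0 := by
    exact_mod_cast Fintype.card_ne_zero
  refine ⟨(Fintype.card (G ⧸ gStab τ v) : ℂ)⁻¹ • avgSum τ (gStab τ v) v, ?_, ?_⟩
  · refine Submodule.smul_mem _ _ ?_
    exact fun g => avgSum_inv τ _ v (fun h hh => hh) g
  · have := Submodule.smul_mem _ (-(Fintype.card (G ⧸ gStab τ v) : ℂ)⁻¹)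
      (avgSum_sub_mem τ (gStab τ v) v)
    convert this using 1
    rw [smul_sub, smul_smul, neg_mul, inv_mul_cancel₀ hc]
    simp [sub_eq_add_neg, add_comm]

lemma gCo_kill (hτ : ∀ v, IsOpen {g | τ g v = v}) {k : V} (hk : k ∈ gCo τ) : ∃ H₀ : Subgroup G, IsOpen (H₀ : Set G) ∧
    ∀ (H : Subgroup G) [Fintype (G ⧸ H)], H ≤ H₀ → avgSum τ H k = 0 := by
  unfold gCo at hk
  induction hk using Submodule.span_induction with
  | mem x hx =>
    obtain ⟨g, w, rfl⟩ := hx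
    exact ⟨gStab τ w, hτ w, fun H _ hH => avgSum_eq_zero_of_gen τ H g w fun h hh => hH hh⟩
  | zero => exact ⟨⊤, isOpen_univ, fun H _ _ => by simp [avgSum]⟩
  | add x y _ _ hx hy =>
    obtain ⟨H1, h1, h1'⟩ := hx
    obtain ⟨H2, h2, h2'⟩ := hy
    refine ⟨H1 ⊓ H2, h1.inter h2, fun H _ hH => ?_⟩
    have e1 := h1' H (hH.trans inf_le_left)
    have e2 := h2' H (hH.trans inf_le_right)
    simp only [avgSum, map_add, Finset.sum_add_distrib] at *
    rw [e1, e2, add_zero]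
  | smul c x _ hx =>
    obtain ⟨H1, h1, h1'⟩ := hx
    refine ⟨H1, h1, fun H _ hH => ?_⟩
    have e1 := h1' H hH
    simp only [avgSum, map_smul, ← Finset.smul_sum] at *
    rw [e1, smul_zero]

lemma gDisj (hτ : ∀ v, IsOpen {g | τ g v = v}) {v : V} (h1 : v ∈ gInv τ) (h2 : v ∈ gCo τ) : v = 0 := by
  obtain ⟨H, ho, hH⟩ := gCo_kill τ hτ h2
  have : Finite (G ⧸ H) := Subgroup.quotient_finite_of_isOpen _ ho
  have : Fintype (G ⧸ H) := Fintype.ofFinite _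
  have h3 := hH H le_rfl
  have hc : (Fintype.card (G ⧸ H) : ℂ) ≠ 0 := by
    exact_mod_cast Fintype.card_ne_zero
  have h4 : avgSum τ H v = (Fintype.card (G ⧸ H) : ℂ) • v := by
    unfold avgSum
    rw [Finset.sum_congr rfl fun q _ => h1 _]
    simp [Nat.cast_smul_eq_nsmul]
  rw [h4] at h3
  exact (smul_eq_zero.1 h3).resolve_left hc
end

/-! index -/
def HasIdx {X : Type*} [AddCommGroup X] [Module ℂ X] (f : X →ₗ[ℂ] X) (n : ℕ) : Prop :=
  Module.Finite ℂ (LinearMap.ker f) ∧ Module.Finite ℂ (X ⧸ LinearMap.range f) ∧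
  Module.finrank ℂ (X ⧸ LinearMap.range f) = Module.finrank ℂ (LinearMap.ker f) + n

lemma hasIdx_fd {X : Type*} [AddCommGroup X] [Module ℂ X] [Module.Finite ℂ X]
    (f : X →ₗ[ℂ] X) : HasIdx f 0 := by
  refine ⟨inferInstance, inferInstance, ?_⟩
  have h1 := LinearMap.finrank_range_add_finrank_ker f
  have h2 := Submodule.finrank_quotient_add_finrank (LinearMap.range f)
  omega

lemma exact_finrank {A B C : Type*} [AddCommGroup A] [Module ℂ A] [AddCommGroup B] [Module ℂ B]
    [AddCommGroup C] [Module ℂ C] (f : A →ₗ[ℂ] B) (g : B →ₗ[ℂ] C) (h : Function.Exact f g)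
    [Module.Finite ℂ A] [Module.Finite ℂ C] : Module.Finite ℂ B ∧
    Module.finrank ℂ B = Module.finrank ℂ (LinearMap.range f)
       + Module.finrank ℂ (LinearMap.range g) := by
  have hk : LinearMap.ker g = LinearMap.range f := LinearMap.exact_iff.1 h
  have : Module.Finite ℂ B := by
    have : Module.Finite ℂ (LinearMap.ker g) := by rw [hk]; infer_instance
    have : Module.Finite ℂ (B ⧸ LinearMap.ker g) :=
      Module.Finite.equiv (g.quotKerEquivRange).symm
    exact Module.Finite.of_submodule_quotient (LinearMap.ker g)
  refine ⟨this, ?_⟩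
  rw [← LinearMap.finrank_range_add_finrank_ker g, hk, add_comm]

lemma hasIdx_add {X Y Z : Type*} [AddCommGroup X] [Module ℂ X] [AddCommGroup Y] [Module ℂ Y]
    [AddCommGroup Z] [Module ℂ Z] (f : X →ₗ[ℂ] X) (g : Y →ₗ[ℂ] Y) (h : Z →ₗ[ℂ] Z)
    (i : X →ₗ[ℂ] Y) (p : Y →ₗ[ℂ] Z) (hi : Function.Injective i) (hp : Function.Surjective p)
    (hex : Function.Exact i p) (h1 : g.comp i = i.comp f) (h2 : h.comp p = p.comp g)
    {m n : ℕ} (hf : HasIdx f m) (hh : HasIdx h n) : HasIdx g (m + n) := by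
  obtain ⟨f1, f2, f3⟩ := hf
  obtain ⟨g1, g2, g3⟩ := hh
  have e1 : ∀ x, g (i x) = i (f x) := fun x => LinearMap.congr_fun h1 x
  have e2 : ∀ x, h (p x) = p (g x) := fun x => LinearMap.congr_fun h2 x
  let k1 : LinearMap.ker f →ₗ[ℂ] LinearMap.ker g :=
    i.restrict fun x hx => by
      rw [LinearMap.mem_ker] at hx ⊢; rw [e1, hx, map_zero]
  let k2 : LinearMap.ker g →ₗ[ℂ] LinearMap.ker h :=
    p.restrict fun x hx => by
      rw [LinearMap.mem_ker] at hx ⊢; rw [e2, hx, map_zero]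
  let c1 : (X ⧸ LinearMap.range f) →ₗ[ℂ] (Y ⧸ LinearMap.range g) :=
    Submodule.mapQ _ _ i (by rintro _ ⟨x, rfl⟩; exact ⟨i x, e1 x⟩)
  let c2 : (Y ⧸ LinearMap.range g) →ₗ[ℂ] (Z ⧸ LinearMap.range h) :=
    Submodule.mapQ _ _ p (by rintro _ ⟨x, rfl⟩; exact ⟨p x, e2 x⟩)
  have x0 : Function.Injective k1 := by
    intro a b hab
    exact Subtype.ext (hi (congrArg Subtype.val hab))
  have x1 : Function.Exact k1 k2 := by
    rintro ⟨y, hy⟩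
    constructor
    · intro hz
      obtain ⟨x, rfl⟩ := (hex y).1 (congrArg Subtype.val hz)
      refine ⟨⟨x, ?_⟩, rfl⟩
      rw [LinearMap.mem_ker] at hy ⊢
      rw [e1] at hy
      exact hi (by rw [hy, map_zero])
    · rintro ⟨x, hx⟩
      apply Subtype.ext
      rw [← hx]
      exact (hex _).2 ⟨x.1, rfl⟩
  have x5 : Function.Surjective c2 := by
    intro z
    obtain ⟨z, rfl⟩ := Submodule.Quotient.mk_surjective _ z
    obtain ⟨y, rfl⟩ := hp z
    exact ⟨Submodule.Quotient.mk y, rfl⟩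
  have x4 : Function.Exact c1 c2 := by
    intro y
    obtain ⟨y, rfl⟩ := Submodule.Quotient.mk_surjective _ y
    constructor
    · intro hz
      have hz' : p y ∈ LinearMap.range h := by
        rwa [← Submodule.Quotient.mk_eq_zero]
      obtain ⟨z, hz⟩ := hz'
      obtain ⟨y', rfl⟩ := hp z
      have : p (y - g y') = 0 := by rw [map_sub, ← e2, hz, sub_self]
      obtain ⟨x, hx⟩ := (hex _).1 this
      refine ⟨Submodule.Quotient.mk x, ?_⟩
      show Submodule.Quotient.mk (i x) = _
      rw [hx, Submodule.Quotient.eq]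
      exact ⟨-y', by simp⟩
    · rintro ⟨x, hx⟩
      obtain ⟨x, rfl⟩ := Submodule.Quotient.mk_surjective _ x
      rw [← hx]
      show Submodule.Quotient.mk (p (i x)) = _
      rw [(hex _).2 ⟨x, rfl⟩]; rfl
  let δ := SnakeLemma.δ' f g h i p hex i p hex h1.symm h2.symm
    (LinearMap.ker h).subtype (LinearMap.exact_subtype_ker_map h)
    (LinearMap.range f).mkQ (LinearMap.exact_map_mkQ_range f) hp hi
  have x2 : Function.Exact k2 δ :=
    SnakeLemma.exact_δ'_right f g h i p hex i p hex h1.symm h2.symm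
      (LinearMap.ker g).subtype (LinearMap.exact_subtype_ker_map g)
      (LinearMap.ker h).subtype (LinearMap.exact_subtype_ker_map h)
      (LinearMap.range f).mkQ (LinearMap.exact_map_mkQ_range f) hp hi k2 (by ext; rfl)
      Subtype.val_injective
  have x3 : Function.Exact δ c1 :=
    SnakeLemma.exact_δ'_left f g h i p hex i p hex h1.symm h2.symm
      (LinearMap.ker h).subtype (LinearMap.exact_subtype_ker_map h)
      (LinearMap.range f).mkQ (LinearMap.exact_map_mkQ_range f)
      (LinearMap.range g).mkQ (LinearMap.exact_map_mkQ_range g) hp hi c1 (by ext; rfl)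
      (Submodule.mkQ_surjective _)
  obtain ⟨a1, a2⟩ := exact_finrank k1 k2 x1
  obtain ⟨-, a3⟩ := exact_finrank k2 δ x2
  obtain ⟨a5, a6⟩ := exact_finrank c1 c2 x4
  obtain ⟨-, a4⟩ := exact_finrank δ c1 x3
  refine ⟨a1, a5, ?_⟩
  have b1 := LinearMap.finrank_range_of_inj x0
  have b2 : Module.finrank ℂ (LinearMap.range c2) = Module.finrank ℂ (Z ⧸ LinearMap.range h) := by
    rw [LinearMap.range_eq_top.2 x5, finrank_top]
  omega

end Part1

section Part2
open Aff

section field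
variable {K : Type*} [NontriviallyNormedField K] [ProperSpace K]

lemma annulus_compact (δ R : ℝ) (hδ : 0 < δ) :
    IsCompact {u : Kˣ | δ ≤ ‖(u : K)‖ ∧ ‖(u : K)‖ ≤ R} := by
  rw [Units.isEmbedding_val₀.isCompact_iff]
  have : ((↑) : Kˣ → K) '' {u : Kˣ | δ ≤ ‖(u : K)‖ ∧ ‖(u : K)‖ ≤ R}
      = {x : K | δ ≤ ‖x‖} ∩ Metric.closedBall 0 R := by
    ext x
    constructor
    · rintro ⟨u, ⟨h1, h2⟩, rfl⟩
      exact ⟨h1, by simpa using h2⟩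
    · rintro ⟨h1, h2⟩
      have hx : x ≠ 0 := by
        rintro rfl
        have : δ ≤ ‖(0 : K)‖ := h1
        rw [norm_zero] at this; linarith
      exact ⟨Units.mk0 x hx, ⟨h1, by simpa using h2⟩, rfl⟩
  rw [this]
  exact (isCompact_closedBall (0 : K) R).inter_left
    (isClosed_le continuous_const continuous_norm)

def oSub (K : Type*) [NontriviallyNormedField K] : Subgroup Kˣ where
  carrier := {u | ‖(u : K)‖ = 1}
  one_mem' := by simp
  mul_mem' {a b} ha hb := by
    simp only [Set.mem_ofPred_eq] at *
    simp [ha, hb]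
  inv_mem' {a} ha := by
    simp only [Set.mem_ofPred_eq] at *
    simp [ha]

lemma mem_oSub (u : Kˣ) : u ∈ oSub K ↔ ‖(u : K)‖ = 1 := Iff.rfl

instance : CompactSpace (oSub K) := by
  refine isCompact_iff_compactSpace.1 ?_
  convert annulus_compact (K := K) 1 1 one_pos using 1
  ext u
  show ‖(u : K)‖ = 1 ↔ _
  constructor
  · intro h; exact ⟨h.ge, h.le⟩
  · rintro ⟨h1, h2⟩; exact le_antisymm h2 h1

lemma exists_unif (K : Type*) [NontriviallyNormedField K] [IsUltrametricDist K] [ProperSpace K] :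
    ∃ ϖ : Kˣ, ‖(ϖ : K)‖ < 1 ∧ ∀ u : Kˣ, ∃ (n : ℤ) (o : Kˣ), ‖(o : K)‖ = 1 ∧ u = ϖ ^ n * o := by
  have hc : IsCompact (Metric.ball (0 : K) 1) :=
    (isCompact_closedBall (0 : K) 1).of_isClosed_subset (IsUltrametricDist.isClosed_ball _ _)
      Metric.ball_subset_closedBall
  obtain ⟨p, hp, hmax⟩ := hc.exists_isMaxOn ⟨0, by simp⟩ continuous_norm.continuousOn
  obtain ⟨z, hz0, hz1⟩ := NormedField.exists_norm_lt_one K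
  have hzp : ‖z‖ ≤ ‖p‖ := hmax (by simpa using hz1)
  have hp0 : 0 < ‖p‖ := lt_of_lt_of_le hz0 hzp
  have hp1 : ‖p‖ < 1 := by simpa using hp
  refine ⟨Units.mk0 p (norm_pos_iff.1 hp0), hp1, fun u => ?_⟩
  set ϖ : Kˣ := Units.mk0 p (norm_pos_iff.1 hp0) with hϖ
  have hu : 0 < ‖(u : K)‖ := norm_pos_iff.2 u.ne_zero
  obtain ⟨n, hn1, hn2⟩ := exists_mem_Ioc_zpow hu (one_lt_inv₀ hp0 |>.2 hp1)
  refine ⟨-(n + 1), ϖ ^ (n + 1) * u, ?_, ?_⟩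
  · have e : ‖((ϖ ^ (n + 1) * u : Kˣ) : K)‖ = ‖p‖ ^ (n + 1) * ‖(u : K)‖ := by
      simp [hϖ]
    have hle : ‖((ϖ ^ (n + 1) * u : Kˣ) : K)‖ ≤ 1 := by
      rw [e]
      calc ‖p‖ ^ (n + 1) * ‖(u : K)‖ ≤ ‖p‖ ^ (n + 1) * (‖p‖⁻¹) ^ (n + 1) := by gcongr
        _ = 1 := by rw [← mul_zpow, mul_inv_cancel₀ hp0.ne', one_zpow]
    have hgt : ‖p‖ < ‖((ϖ ^ (n + 1) * u : Kˣ) : K)‖ := by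
      rw [e]
      calc ‖p‖ = ‖p‖ ^ (n + 1) * (‖p‖⁻¹) ^ n := by
            rw [zpow_add_one₀ hp0.ne', mul_right_comm, ← mul_zpow, mul_inv_cancel₀ hp0.ne',
              one_zpow, one_mul]
        _ < _ := by gcongr
    by_contra hne
    have hlt := lt_of_le_of_ne hle hne
    have : ‖((ϖ ^ (n + 1) * u : Kˣ) : K)‖ ≤ ‖p‖ :=
      hmax (show _ ∈ Metric.ball (0 : K) 1 by rwa [mem_ball_zero_iff])
    exact absurd this (not_le.2 hgt)
  · rw [← mul_assoc, ← zpow_add]; simp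

def bl (K : Type*) [NontriviallyNormedField K] [IsUltrametricDist K] (r : ℝ) (hr : 0 ≤ r) :
    AddSubgroup K where
  carrier := {b | ‖b‖ ≤ r}
  zero_mem' := by simpa using hr
  add_mem' {a b} ha hb := (IsUltrametricDist.norm_add_le_max a b).trans (max_le ha hb)
  neg_mem' {a} ha := by simpa using ha

lemma mem_bl [IsUltrametricDist K] {r : ℝ} (hr : 0 ≤ r) (b : K) : b ∈ bl K r hr ↔ ‖b‖ ≤ r :=
  Iff.rfl

instance [IsUltrametricDist K] (r : ℝ) (hr : 0 ≤ r) : CompactSpace (bl K r hr) := by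
  refine isCompact_iff_compactSpace.1 ?_
  convert isCompact_closedBall (0 : K) r using 1
  ext b
  simp [mem_bl]

instance [IsUltrametricDist K] (r : ℝ) (hr : 0 ≤ r) : CompactSpace (Multiplicative (bl K r hr)) :=
  inferInstanceAs (CompactSpace (bl K r hr))

lemma psi_small (ψ : AddChar K ℂ) (hψlc : IsLocallyConstant (⇑ψ)) :
    ∃ η > 0, ∀ b : K, ‖b‖ ≤ η → ψ b = 1 := by
  have h1 : IsOpen (ψ ⁻¹' {1}) := hψlc _
  have h2 : (0 : K) ∈ ψ ⁻¹' {1} := by simp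
  obtain ⟨ε, hε, h⟩ := Metric.isOpen_iff.1 h1 0 h2
  refine ⟨ε / 2, by positivity, fun b hb => ?_⟩
  exact h (by rw [mem_ball_zero_iff]; linarith)

lemma psi_ne (ψ : AddChar K ℂ) (hψne : ψ ≠ 1) : ∃ y : K, ψ y ≠ 1 ∧ y ≠ 0 := by
  obtain ⟨y, hy⟩ := AddChar.ne_one_iff.1 hψne
  exact ⟨y, hy, by rintro rfl; simp at hy⟩

end field

section rep
variable {K : Type*} [NontriviallyNormedField K] 
variable {V : Type*} [AddCommGroup V] [Module ℂ V]

lemma cont_xT : Continuous (xT : Kˣ → Aff K) := by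
  rw [continuous_induced_rng]
  exact continuous_id.prodMk continuous_const

lemma cont_sS : Continuous (sS : K → Aff K) := by
  rw [continuous_induced_rng]
  exact continuous_const.prodMk continuous_id

lemma smooth_T {ρ : Rep K V} (hρ : IsSmoothRep ρ) (v : V) : IsOpen {u : Kˣ | ρ (xT u) v = v} :=
  (hρ v).preimage cont_xT

lemma smooth_S' {ρ : Rep K V} (hρ : IsSmoothRep ρ) (v : V) : IsOpen {b : K | ρ (sS b) v = v} :=
  (hρ v).preimage cont_sS

lemma sS_zero : (sS 0 : Aff K) = 1 := rfl
lemma xT_one : (xT 1 : Aff K) = 1 := rfl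
lemma sS_add (a b : K) : (sS (a + b) : Aff K) = sS a * sS b := by ext <;> simp
lemma xT_mul (a b : Kˣ) : (xT (a * b) : Aff K) = xT a * xT b := by ext <;> simp

lemma rho_sS_add (ρ : Rep K V) (a b : K) (v : V) : ρ (sS (a + b)) v = ρ (sS a) (ρ (sS b) v) := by
  rw [sS_add, map_mul, Module.End.mul_apply]

lemma rho_xT_mul (ρ : Rep K V) (a b : Kˣ) (v : V) : ρ (xT (a * b)) v = ρ (xT a) (ρ (xT b) v) := by
  rw [xT_mul, map_mul, Module.End.mul_apply]

lemma rho_xT_one (ρ : Rep K V) (v : V) : ρ (xT 1) v = v := by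
  rw [xT_one, map_one]; rfl

lemma rho_sS_zero (ρ : Rep K V) (v : V) : ρ (sS 0) v = v := by
  rw [sS_zero, map_one]; rfl

lemma rho_comm (ρ : Rep K V) (u : Kˣ) (b : K) (v : V) :
    ρ (xT u) (ρ (sS b) v) = ρ (sS ((u : K) * b)) (ρ (xT u) v) := by
  rw [← Module.End.mul_apply, ← map_mul, mul_sS, map_mul, Module.End.mul_apply]; rfl

lemma rho_decomp (ρ : Rep K V) (g : Aff K) (v : V) :
    ρ g v = ρ (xT g.t) (ρ (sS (((g.t⁻¹ : Kˣ) : K) * g.s)) v) := by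
  conv_lhs => rw [aff_decomp g]
  rw [map_mul, Module.End.mul_apply]

lemma smooth_S {ρ : Rep K V} (hρ : IsSmoothRep ρ) (v : V) :
    ∃ ε > 0, ∀ b : K, ‖b‖ ≤ ε → ρ (sS b) v = v := by
  obtain ⟨ε, hε, h⟩ := Metric.isOpen_iff.1 (smooth_S' hρ v) 0 (rho_sS_zero ρ v)
  refine ⟨ε / 2, by positivity, fun b hb => ?_⟩
  exact h (by rw [mem_ball_zero_iff]; linarith)

def Ar (ρ : Rep K V) (ψ : AddChar K ℂ) (a : K) (r : ℝ) : Submodule ℂ V where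
  carrier := {v | ∀ b : K, ‖b‖ ≤ r → ρ (sS b) v = ψ (a * b) • v}
  zero_mem' := fun b _ => by simp
  add_mem' {x y} hx hy := fun b hb => by rw [map_add, hx b hb, hy b hb, smul_add]
  smul_mem' c x hx := fun b hb => by rw [map_smul, hx b hb, smul_comm]

def Kr (ρ : Rep K V) (ψ : AddChar K ℂ) (a : K) (r : ℝ) : Submodule ℂ V :=
  Submodule.span ℂ {w : V | ∃ (b : K) (v : V), ‖b‖ ≤ r ∧ w = ρ (sS b) v - ψ (a * b) • v}

lemma Kr_mono (ρ : Rep K V) (ψ : AddChar K ℂ) (a : K) {r r' : ℝ} (h : r ≤ r') :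
    Kr ρ ψ a r ≤ Kr ρ ψ a r' := by
  refine Submodule.span_mono ?_
  rintro w ⟨b, v, hb, rfl⟩
  exact ⟨b, v, hb.trans h, rfl⟩

variable [IsUltrametricDist K]

def tauS (ρ : Rep K V) (ψ : AddChar K ℂ) (a : K) (r : ℝ) (hr : 0 ≤ r) :
    Representation ℂ (Multiplicative (bl K r hr)) V where
  toFun g := ψ (-(a * (g.toAdd : K))) • ρ (sS (g.toAdd : K))
  map_one' := by
    apply LinearMap.ext; intro v
    simp [rho_sS_zero]
  map_mul' g h := by
    apply LinearMap.ext; intro v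
    simp only [toAdd_mul, AddSubgroup.coe_add, LinearMap.smul_apply, Module.End.mul_apply,
      rho_sS_add, map_smul, smul_smul]
    rw [mul_add, neg_add, AddChar.map_add_eq_mul, mul_comm (ψ _) (ψ _)]

lemma tauS_apply (ρ : Rep K V) (ψ : AddChar K ℂ) (a : K) (r : ℝ) (hr : 0 ≤ r)
    (g : Multiplicative (bl K r hr)) (v : V) :
    tauS ρ ψ a r hr g v = ψ (-(a * (g.toAdd : K))) • ρ (sS (g.toAdd : K)) v := rfl

lemma psi_neg_mul (ψ : AddChar K ℂ) (x : K) : ψ (-x) * ψ x = 1 := by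
  rw [← AddChar.map_add_eq_mul]; simp

lemma tauS_inv (ρ : Rep K V) (ψ : AddChar K ℂ) (a : K) (r : ℝ) (hr : 0 ≤ r) :
    gInv (tauS ρ ψ a r hr) = Ar ρ ψ a r := by
  ext v
  constructor
  · intro h b hb
    have := h (Multiplicative.ofAdd ⟨b, hb⟩)
    rw [tauS_apply] at this
    simp only [toAdd_ofAdd] at this
    conv_rhs => rw [← this, smul_smul, mul_comm, psi_neg_mul, one_smul]
  · intro h g
    rw [tauS_apply, h _ (g.toAdd).2, smul_smul, psi_neg_mul, one_smul]

lemma tauS_co (ρ : Rep K V) (ψ : AddChar K ℂ) (a : K) (r : ℝ) (hr : 0 ≤ r) :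
    gCo (tauS ρ ψ a r hr) = Kr ρ ψ a r := by
  have key : ∀ (b : K) (v : V), ψ (-(a * b)) • ρ (sS b) v - v
      = ψ (-(a * b)) • (ρ (sS b) v - ψ (a * b) • v) := by
    intro b v
    rw [smul_sub, smul_smul, psi_neg_mul, one_smul]
  apply le_antisymm
  · refine Submodule.span_le.2 ?_
    rintro w ⟨g, v, rfl⟩
    rw [SetLike.mem_coe, tauS_apply, key]
    exact Submodule.smul_mem _ _ (Submodule.subset_span ⟨_, v, (g.toAdd).2, rfl⟩)
  · refine Submodule.span_le.2 ?_
    rintro w ⟨b, v, hb, rfl⟩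
    have h1 : ρ (sS b) v - ψ (a * b) • v
        = ψ (a * b) • (tauS ρ ψ a r hr (Multiplicative.ofAdd ⟨b, hb⟩) v - v) := by
      rw [tauS_apply]
      simp only [toAdd_ofAdd]
      rw [key, smul_smul, mul_comm (ψ _), psi_neg_mul, one_smul]
    rw [SetLike.mem_coe, h1]
    exact Submodule.smul_mem _ _ (Submodule.subset_span ⟨_, v, rfl⟩)

lemma tauS_smooth {ρ : Rep K V} (hρ : IsSmoothRep ρ) (ψ : AddChar K ℂ)
    (hψlc : IsLocallyConstant (⇑ψ)) (a : K) (r : ℝ) (hr : 0 ≤ r) (v : V) :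
    IsOpen {g | tauS ρ ψ a r hr g v = v} := by
  have : IsOpen ((gStab (tauS ρ ψ a r hr) v : Subgroup _) : Set (Multiplicative (bl K r hr))) := by
    refine Subgroup.isOpen_of_mem_nhds _ (g := 1) ?_
    have c1 : Continuous (fun g : Multiplicative (bl K r hr) => (g.toAdd : K)) :=
      continuous_subtype_val.comp continuous_toAdd
    have o1 := (smooth_S' hρ v).preimage c1
    have o2 : IsOpen (ψ ⁻¹' {1}) := hψlc _
    have o3 := o2.preimage ((continuous_const.mul c1).neg :
      Continuous (fun g : Multiplicative (bl K r hr) => -(a * (g.toAdd : K))))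
    refine Filter.mem_of_superset ((o1.inter o3).mem_nhds ?_) ?_
    · constructor
      · exact rho_sS_zero ρ v
      · simp
    · rintro g ⟨h1, h2⟩
      have h1' : ρ (sS (g.toAdd : K)) v = v := h1
      have h2' : ψ (-(a * (g.toAdd : K))) = 1 := h2
      show tauS ρ ψ a r hr g v = v
      rw [tauS_apply, h1', h2', one_smul]
  exact this

lemma S_decomp [ProperSpace K] {ρ : Rep K V} (hρ : IsSmoothRep ρ) (ψ : AddChar K ℂ)
    (hψlc : IsLocallyConstant (⇑ψ)) (a : K) (r : ℝ) (hr : 0 ≤ r) (v : V) :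
    ∃ w ∈ Ar ρ ψ a r, v - w ∈ Kr ρ ψ a r := by
  have := gDecomp (tauS ρ ψ a r hr) (tauS_smooth hρ ψ hψlc a r hr) v
  rwa [tauS_inv, tauS_co] at this

lemma S_disj [ProperSpace K] {ρ : Rep K V} (hρ : IsSmoothRep ρ) (ψ : AddChar K ℂ)
    (hψlc : IsLocallyConstant (⇑ψ)) (a : K) (r : ℝ) (hr : 0 ≤ r) {v : V}
    (h1 : v ∈ Ar ρ ψ a r) (h2 : v ∈ Kr ρ ψ a r) : v = 0 := by
  rw [← tauS_inv ρ ψ a r hr] at h1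
  rw [← tauS_co ρ ψ a r hr] at h2
  exact gDisj _ (tauS_smooth hρ ψ hψlc a r hr) h1 h2

end rep

section reT
variable {K : Type*} [NontriviallyNormedField K] 
variable {V : Type*} [AddCommGroup V] [Module ℂ V]

def AO (ρ : Rep K V) (χ : Kˣ →* ℂˣ) : Submodule ℂ V where
  carrier := {v | ∀ u : Kˣ, ‖(u : K)‖ = 1 → ρ (xT u) v = (χ u : ℂ) • v}
  zero_mem' := fun b _ => by simp
  add_mem' {x y} hx hy := fun b hb => by rw [map_add, hx b hb, hy b hb, smul_add]
  smul_mem' c x hx := fun b hb => by rw [map_smul, hx b hb, smul_comm]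

def KO (ρ : Rep K V) (χ : Kˣ →* ℂˣ) : Submodule ℂ V :=
  Submodule.span ℂ {w : V | ∃ (u : Kˣ) (v : V), ‖(u : K)‖ = 1 ∧ w = ρ (xT u) v - (χ u : ℂ) • v}

def tauT (ρ : Rep K V) (χ : Kˣ →* ℂˣ) : Representation ℂ (oSub K) V where
  toFun g := ((χ (g : Kˣ))⁻¹ : ℂˣ).val • ρ (xT (g : Kˣ))
  map_one' := by
    apply LinearMap.ext; intro v
    simp [rho_xT_one]
  map_mul' g h := by
    apply LinearMap.ext; intro v
    simp only [Subgroup.coe_mul, LinearMap.smul_apply, Module.End.mul_apply,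
      rho_xT_mul, map_smul, smul_smul, map_mul, mul_inv, Units.val_mul]
    rw [mul_comm]

lemma tauT_apply (ρ : Rep K V) (χ : Kˣ →* ℂˣ) (g : oSub K) (v : V) :
    tauT ρ χ g v = ((χ (g : Kˣ))⁻¹ : ℂˣ).val • ρ (xT (g : Kˣ)) v := rfl

lemma tauT_inv (ρ : Rep K V) (χ : Kˣ →* ℂˣ) : gInv (tauT ρ χ) = AO ρ χ := by
  ext v
  constructor
  · intro h u hu
    have := h ⟨u, hu⟩
    rw [tauT_apply] at this
    simp only at this
    conv_rhs => rw [← this, smul_smul, Units.mul_inv, one_smul]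
  · intro h g
    rw [tauT_apply, h _ g.2, smul_smul, Units.inv_mul, one_smul]

lemma tauT_co (ρ : Rep K V) (χ : Kˣ →* ℂˣ) : gCo (tauT ρ χ) = KO ρ χ := by
  have key : ∀ (u : Kˣ) (v : V), ((χ u)⁻¹ : ℂˣ).val • ρ (xT u) v - v
      = ((χ u)⁻¹ : ℂˣ).val • (ρ (xT u) v - (χ u : ℂ) • v) := by
    intro b v
    rw [smul_sub, smul_smul, Units.inv_mul, one_smul]
  apply le_antisymm
  · refine Submodule.span_le.2 ?_
    rintro w ⟨g, v, rfl⟩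
    rw [SetLike.mem_coe, tauT_apply, key]
    exact Submodule.smul_mem _ _ (Submodule.subset_span ⟨_, v, g.2, rfl⟩)
  · refine Submodule.span_le.2 ?_
    rintro w ⟨b, v, hb, rfl⟩
    have h1 : ρ (xT b) v - (χ b : ℂ) • v
        = (χ b : ℂ) • (tauT ρ χ ⟨b, hb⟩ v - v) := by
      rw [tauT_apply, key, smul_smul, Units.mul_inv, one_smul]
    rw [SetLike.mem_coe, h1]
    exact Submodule.smul_mem _ _ (Submodule.subset_span ⟨_, v, rfl⟩)

lemma tauT_smooth {ρ : Rep K V} (hρ : IsSmoothRep ρ) (χ : Kˣ →* ℂˣ) (hχ : SmoothMulChar χ) (v : V) :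
    IsOpen {g | tauT ρ χ g v = v} := by
  have : IsOpen ((gStab (tauT ρ χ) v : Subgroup _) : Set (oSub K)) := by
    refine Subgroup.isOpen_of_mem_nhds _ (g := 1) ?_
    have c1 : Continuous (fun g : oSub K => (g : Kˣ)) := continuous_subtype_val
    have o1 := (smooth_T hρ v).preimage c1
    have o3 := IsOpen.preimage c1 hχ
    refine Filter.mem_of_superset ((o1.inter o3).mem_nhds ?_) ?_
    · constructor
      · exact rho_xT_one ρ v
      · simp
    · rintro g ⟨h1, h2⟩
      have h1' : ρ (xT (g : Kˣ)) v = v := h1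
      have h2' : χ (g : Kˣ) = 1 := h2
      show tauT ρ χ g v = v
      rw [tauT_apply, h1', h2']; simp
  exact this

lemma T_decomp [ProperSpace K] {ρ : Rep K V} (hρ : IsSmoothRep ρ) (χ : Kˣ →* ℂˣ)
    (hχ : SmoothMulChar χ) (v : V) :
    ∃ w ∈ AO ρ χ, v - w ∈ KO ρ χ := by
  have := gDecomp (tauT ρ χ) (tauT_smooth hρ χ hχ) v
  rwa [tauT_inv, tauT_co] at this

lemma T_disj [ProperSpace K] {ρ : Rep K V} (hρ : IsSmoothRep ρ) (χ : Kˣ →* ℂˣ)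
    (hχ : SmoothMulChar χ) {v : V}
    (h1 : v ∈ AO ρ χ) (h2 : v ∈ KO ρ χ) : v = 0 := by
  rw [← tauT_inv ρ χ] at h1
  rw [← tauT_co ρ χ] at h2
  exact gDisj _ (tauT_smooth hρ χ hχ) h1 h2

end reT
end Part2

section Part3
open Aff

variable {K : Type*} [NontriviallyNormedField K] 
variable {V : Type*} [AddCommGroup V] [Module ℂ V]

lemma rho_xT_comm (ρ : Rep K V) (a b : Kˣ) (v : V) :
    ρ (xT a) (ρ (xT b) v) = ρ (xT b) (ρ (xT a) v) := by
  rw [← rho_xT_mul, mul_comm, rho_xT_mul]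

def DO (ρ : Rep K V) (χ : Kˣ →* ℂˣ) (ϖ : Kˣ) : AO ρ χ →ₗ[ℂ] AO ρ χ :=
  (ρ (xT ϖ) - (χ ϖ : ℂ) • LinearMap.id).restrict (by
    intro v hv u hu
    simp only [LinearMap.sub_apply, LinearMap.smul_apply, LinearMap.id_apply, map_sub, map_smul]
    rw [rho_xT_comm, hv u hu, map_smul, smul_sub, smul_comm (χ ϖ : ℂ)])

lemma DO_apply (ρ : Rep K V) (χ : Kˣ →* ℂˣ) (ϖ : Kˣ) (v : AO ρ χ) :
    (DO ρ χ ϖ v : V) = ρ (xT ϖ) v - (χ ϖ : ℂ) • (v : V) := rfl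

def IsUnif (ϖ : Kˣ) : Prop :=
  ‖(ϖ : K)‖ < 1 ∧ ∀ u : Kˣ, ∃ (n : ℤ) (o : Kˣ), ‖(o : K)‖ = 1 ∧ u = ϖ ^ n * o

def RepIdx (ρ : Rep K V) (χ : Kˣ →* ℂˣ) (n : ℕ) : Prop :=
  Module.Finite ℂ (tEigen ρ χ) ∧ Module.Finite ℂ (V ⧸ tTwistKer ρ χ) ∧
  Module.finrank ℂ (V ⧸ tTwistKer ρ χ) = Module.finrank ℂ (tEigen ρ χ) + n

lemma mem_tEigen (ρ : Rep K V) (χ : Kˣ →* ℂˣ) (v : V) :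
    v ∈ tEigen ρ χ ↔ ∀ u : Kˣ, ρ (xT u) v = (χ u : ℂ) • v := Iff.rfl

lemma tw_mem (ρ : Rep K V) (χ : Kˣ →* ℂˣ) (u : Kˣ) (v : V) :
    ρ (xT u) v - (χ u : ℂ) • v ∈ tTwistKer ρ χ := Submodule.subset_span ⟨u, v, rfl⟩

lemma KO_le (ρ : Rep K V) (χ : Kˣ →* ℂˣ) : KO ρ χ ≤ tTwistKer ρ χ := by
  refine Submodule.span_le.2 ?_
  rintro w ⟨u, v, -, rfl⟩
  exact tw_mem ρ χ u v

lemma map_ker_DO {ρ : Rep K V} {χ : Kˣ →* ℂˣ} {ϖ : Kˣ} (hϖ : IsUnif ϖ) :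
    (LinearMap.ker (DO ρ χ ϖ)).map (AO ρ χ).subtype = tEigen ρ χ := by
  ext v
  constructor
  · rintro ⟨w, hw, rfl⟩
    have h1 : ρ (xT ϖ) (w : V) = (χ ϖ : ℂ) • (w : V) := by
      have h0 : DO ρ χ ϖ w = 0 := hw
      have := congrArg Subtype.val h0
      rw [DO_apply] at this
      exact sub_eq_zero.1 this
    have h2 : ∀ n : ℕ, ρ (xT (ϖ ^ n)) (w : V) = (χ (ϖ ^ n) : ℂ) • (w : V) := by
      intro n
      induction n with
      | zero => simp [rho_xT_one]
      | succ n ih =>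
        rw [pow_succ, rho_xT_mul, h1, map_smul, ih, smul_smul, map_mul, Units.val_mul, mul_comm]
    have h3 : ∀ n : ℤ, ρ (xT (ϖ ^ n)) (w : V) = (χ (ϖ ^ n) : ℂ) • (w : V) := by
      intro n
      obtain ⟨m, rfl | rfl⟩ := n.eq_nat_or_neg
      · rw [zpow_natCast]; exact h2 m
      · have h4 := congrArg (fun z => (χ (ϖ ^ (-(m : ℤ))) : ℂ) • ρ (xT (ϖ ^ (-(m : ℤ)))) z) (h2 m)
        beta_reduce at h4
        rw [← rho_xT_mul, map_smul, smul_smul, ← Units.val_mul, ← map_mul] at h4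
        simp only [zpow_neg, zpow_natCast, inv_mul_cancel, rho_xT_one, map_one, Units.val_one,
          one_smul] at h4 ⊢
        exact h4.symm
    intro u
    obtain ⟨n, o, ho, rfl⟩ := hϖ.2 u
    show ρ (xT (ϖ ^ n * o)) (w : V) = _ • (w : V)
    rw [rho_xT_mul, w.2 o ho, map_smul, h3, smul_smul, map_mul, Units.val_mul, mul_comm]
  · intro hv
    rw [mem_tEigen] at hv
    refine ⟨⟨v, fun u _ => hv u⟩, ?_, rfl⟩
    apply Subtype.ext
    rw [DO_apply]
    simp [hv]

lemma DO_zpow {ρ : Rep K V} {χ : Kˣ →* ℂˣ} {ϖ : Kˣ} (n : ℤ) (a : V) (ha : a ∈ AO ρ χ) :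
    ∃ d : AO ρ χ, (DO ρ χ ϖ d : V) = ρ (xT (ϖ ^ n)) a - (χ (ϖ ^ n) : ℂ) • a := by
  induction n with
  | zero => exact ⟨0, by simp [rho_xT_one]⟩
  | succ n ih =>
    obtain ⟨d, hd⟩ := ih
    have hx : ∀ v ∈ AO ρ χ, ρ (xT (ϖ ^ (n : ℤ))) v ∈ AO ρ χ := by
      intro v hv u hu
      rw [rho_xT_comm, hv u hu, map_smul]
    refine ⟨⟨_, hx a ha⟩ + (χ ϖ : ℂ) • d, ?_⟩
    rw [map_add, map_smul, Submodule.coe_add, Submodule.coe_smul, hd, DO_apply]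
    rw [add_comm (n : ℤ) 1, zpow_add, zpow_one, rho_xT_mul, smul_sub, smul_smul, map_mul,
      Units.val_mul]
    abel
  | pred n ih =>
    obtain ⟨d, hd⟩ := ih
    have hx : ∀ v ∈ AO ρ χ, ρ (xT (ϖ⁻¹)) v ∈ AO ρ χ := by
      intro v hv u hu
      rw [rho_xT_comm, hv u hu, map_smul]
    have hx' : ∀ v ∈ AO ρ χ, ρ (xT (ϖ ^ (-(n : ℤ) - 1))) v ∈ AO ρ χ := by
      intro v hv u hu
      rw [rho_xT_comm, hv u hu, map_smul]
    refine ⟨((χ ϖ)⁻¹ : ℂˣ).val • (d - ⟨_, hx' a ha⟩), ?_⟩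
    rw [map_smul, map_sub, Submodule.coe_smul, Submodule.coe_sub, hd, DO_apply, ← rho_xT_mul]
    have e : ϖ * ϖ ^ (-(n : ℤ) - 1) = ϖ ^ (-(n : ℤ)) := by
      rw [mul_comm, ← zpow_add_one]; simp
    rw [e, sub_sub_sub_cancel_left, smul_sub, smul_smul, smul_smul, Units.inv_mul, one_smul,
      ← Units.val_mul, ← map_inv, ← map_mul]
    have e' : ϖ⁻¹ * ϖ ^ (-(n : ℤ)) = ϖ ^ (-(n : ℤ) - 1) := by rw [zpow_sub_one, mul_comm]
    rw [e']

variable [ProperSpace K]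

lemma tw_range {ρ : Rep K V} (hρ : IsSmoothRep ρ) {χ : Kˣ →* ℂˣ} (hχ : SmoothMulChar χ) {ϖ : Kˣ}
    (hϖ : IsUnif ϖ) (v : AO ρ χ) :
    (v : V) ∈ tTwistKer ρ χ ↔ v ∈ LinearMap.range (DO ρ χ ϖ) := by
  constructor
  · intro h
    have key : tTwistKer ρ χ ≤ KO ρ χ ⊔ (LinearMap.range (DO ρ χ ϖ)).map (AO ρ χ).subtype := by
      refine Submodule.span_le.2 ?_
      rintro w ⟨u, x, rfl⟩
      obtain ⟨a, ha, hk⟩ := T_decomp hρ χ hχ x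
      have hKinv : ∀ k ∈ KO ρ χ, ρ (xT u) k ∈ KO ρ χ := by
        intro k hk
        have : KO ρ χ ≤ (KO ρ χ).comap (ρ (xT u)) := by
          refine Submodule.span_le.2 ?_
          rintro w ⟨u', v, h1, rfl⟩
          rw [SetLike.mem_coe, Submodule.mem_comap, map_sub, rho_xT_comm, map_smul]
          exact Submodule.subset_span ⟨u', _, h1, rfl⟩
        exact this hk
      obtain ⟨n, o, ho, rfl⟩ := hϖ.2 u
      obtain ⟨d, hd⟩ := DO_zpow (ρ := ρ) (χ := χ) (ϖ := ϖ) n a ha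
      have e : ρ (xT (ϖ ^ n * o)) x - (χ (ϖ ^ n * o) : ℂ) • x
         = (ρ (xT (ϖ ^ n * o)) (x - a) - (χ (ϖ ^ n * o) : ℂ) • (x - a))
          + (χ o : ℂ) • (DO ρ χ ϖ d : V) := by
        have e1 : ρ (xT (ϖ ^ n * o)) a = (χ o : ℂ) • ρ (xT (ϖ ^ n)) a := by
          rw [rho_xT_mul, ha o ho, map_smul]
        rw [hd, map_sub, smul_sub, smul_sub, smul_smul, e1, map_mul, Units.val_mul,
          mul_comm (χ o : ℂ)]
        abel
      show ρ (xT (ϖ ^ n * o)) x - (χ (ϖ ^ n * o) : ℂ) • x ∈ _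
      rw [e]
      refine Submodule.add_mem_sup (Submodule.sub_mem _ (hKinv _ hk) (Submodule.smul_mem _ _ hk)) ?_
      exact Submodule.smul_mem _ _ ⟨_, ⟨d, rfl⟩, rfl⟩
    obtain ⟨k, hk, d, ⟨d, hd, rfl⟩, hkd⟩ := Submodule.mem_sup.1 (key h)
    have h0 : k = 0 := by
      refine T_disj hρ χ hχ ?_ hk
      have : k = (v : V) - (d : V) := by rw [← hkd]; simp
      rw [this]
      exact Submodule.sub_mem _ v.2 d.2
    rw [h0, zero_add] at hkd
    have : d = v := Subtype.ext hkd
    rwa [← this]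
  · rintro ⟨d, rfl⟩
    exact tw_mem ρ χ ϖ d

lemma repIdx_iff {ρ : Rep K V} (hρ : IsSmoothRep ρ) {χ : Kˣ →* ℂˣ} (hχ : SmoothMulChar χ) {ϖ : Kˣ}
    (hϖ : IsUnif ϖ) (n : ℕ) : RepIdx ρ χ n ↔ HasIdx (DO ρ χ ϖ) n := by
  have e1 : LinearMap.ker (DO ρ χ ϖ) ≃ₗ[ℂ] tEigen ρ χ :=
    (Submodule.equivSubtypeMap (AO ρ χ) (LinearMap.ker (DO ρ χ ϖ))).trans
      (LinearEquiv.ofEq _ _ (map_ker_DO hϖ))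
  have e2 : (AO ρ χ ⧸ LinearMap.range (DO ρ χ ϖ)) ≃ₗ[ℂ] (V ⧸ tTwistKer ρ χ) := by
    let f : AO ρ χ →ₗ[ℂ] (V ⧸ tTwistKer ρ χ) := (tTwistKer ρ χ).mkQ.comp (AO ρ χ).subtype
    have hf : Function.Surjective f := by
      intro x
      obtain ⟨x, rfl⟩ := Submodule.Quotient.mk_surjective _ x
      obtain ⟨a, ha, hk⟩ := T_decomp hρ χ hχ x
      refine ⟨⟨a, ha⟩, ?_⟩
      show Submodule.Quotient.mk a = _
      rw [eq_comm, Submodule.Quotient.eq]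
      exact KO_le ρ χ hk
    have hk : LinearMap.ker f = LinearMap.range (DO ρ χ ϖ) := by
      ext v
      rw [← tw_range hρ hχ hϖ, LinearMap.mem_ker]
      show Submodule.Quotient.mk (v : V) = _ ↔ _
      rw [Submodule.Quotient.mk_eq_zero]
    exact (Submodule.quotEquivOfEq _ _ hk.symm).trans (f.quotKerEquivOfSurjective hf)
  unfold RepIdx HasIdx
  rw [e1.finrank_eq, e2.finrank_eq]
  constructor
  · rintro ⟨h1, h2, h3⟩
    exact ⟨Module.Finite.equiv e1.symm, Module.Finite.equiv e2.symm, h3⟩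
  · rintro ⟨h1, h2, h3⟩
    exact ⟨Module.Finite.equiv e1, Module.Finite.equiv e2, h3⟩

lemma repIdx_add [IsUltrametricDist K] {X Y Z : Type*} [AddCommGroup X] [Module ℂ X]
    [AddCommGroup Y] [Module ℂ Y]
    [AddCommGroup Z] [Module ℂ Z] {ρX : Rep K X} {ρY : Rep K Y} {ρZ : Rep K Z}
    (hX : IsSmoothRep ρX) (hY : IsSmoothRep ρY) (hZ : IsSmoothRep ρZ)
    (i : X →ₗ[ℂ] Y) (p : Y →ₗ[ℂ] Z) (hi : Function.Injective i) (hp : Function.Surjective p)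
    (hex : Function.Exact i p) (h1 : GRep.Equivariant ρX ρY i) (h2 : GRep.Equivariant ρY ρZ p)
    {χ : Kˣ →* ℂˣ} (hχ : SmoothMulChar χ) {m n : ℕ} (hf : RepIdx ρX χ m) (hh : RepIdx ρZ χ n) :
    RepIdx ρY χ (m + n) := by
  obtain ⟨ϖ, hϖ⟩ := exists_unif K
  have hϖ : IsUnif ϖ := hϖ
  rw [repIdx_iff hX hχ hϖ] at hf
  rw [repIdx_iff hZ hχ hϖ] at hh
  rw [repIdx_iff hY hχ hϖ]
  have hAp : ∀ y ∈ AO ρY χ, p y ∈ AO ρZ χ := fun y hy u hu => by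
    rw [← h2, hy u hu, map_smul]
  let i' : AO ρX χ →ₗ[ℂ] AO ρY χ := i.restrict fun x hx u hu => by
    rw [← h1, hx u hu, map_smul]
  let p' : AO ρY χ →ₗ[ℂ] AO ρZ χ := p.restrict hAp
  refine hasIdx_add (DO ρX χ ϖ) (DO ρY χ ϖ) (DO ρZ χ ϖ) i' p' ?_ ?_ ?_ ?_ ?_ hf hh
  · intro a b hab
    exact Subtype.ext (hi (congrArg Subtype.val hab))
  · rintro ⟨z, hz⟩
    obtain ⟨y, rfl⟩ := hp z
    obtain ⟨a, ha, hk⟩ := T_decomp hY χ hχ y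
    refine ⟨⟨a, ha⟩, Subtype.ext ?_⟩
    show p a = p y
    have h3 : p (y - a) ∈ KO ρZ χ := by
      have : KO ρY χ ≤ (KO ρZ χ).comap p := by
        refine Submodule.span_le.2 ?_
        rintro w ⟨u', v, h5, rfl⟩
        rw [SetLike.mem_coe, Submodule.mem_comap, map_sub, h2, map_smul]
        exact Submodule.subset_span ⟨u', _, h5, rfl⟩
      exact this hk
    have h4 : p (y - a) ∈ AO ρZ χ := by
      rw [map_sub]
      exact Submodule.sub_mem _ hz (hAp a ha)
    have := T_disj hZ χ hχ h4 h3
    rw [map_sub, sub_eq_zero] at this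
    exact this.symm
  · rintro ⟨y, hy⟩
    constructor
    · intro h
      obtain ⟨x, rfl⟩ := (hex y).1 (congrArg Subtype.val h)
      refine ⟨⟨x, fun u hu => hi ?_⟩, rfl⟩
      rw [h1, hy u hu, map_smul]
    · rintro ⟨x, hx⟩
      apply Subtype.ext
      rw [← hx]
      exact (hex _).2 ⟨x.1, rfl⟩
  · ext x
    show ρY (xT ϖ) (i x) - (χ ϖ : ℂ) • (i x) = i (ρX (xT ϖ) x - (χ ϖ : ℂ) • (x : X))
    rw [map_sub, map_smul, h1]
  · ext x
    show ρZ (xT ϖ) (p x) - (χ ϖ : ℂ) • (p x) = p (ρY (xT ϖ) x - (χ ϖ : ℂ) • (x : Y))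
    rw [map_sub, map_smul, h2]

lemma repIdx_fd [IsUltrametricDist K] {ρ : Rep K V} (hρ : IsSmoothRep ρ) [Module.Finite ℂ V]
    {χ : Kˣ →* ℂˣ} (hχ : SmoothMulChar χ) : RepIdx ρ χ 0 := by
  obtain ⟨ϖ, hϖ⟩ := exists_unif K
  rw [repIdx_iff hρ hχ hϖ]
  exact hasIdx_fd _

lemma repIdx_iso {W : Type*} [AddCommGroup W] [Module ℂ W] {ρ : Rep K V} {σ : Rep K W}
    (h : GRep.Iso ρ σ) {χ : Kˣ →* ℂˣ} {n : ℕ} (hs : RepIdx σ χ n) : RepIdx ρ χ n := by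
  obtain ⟨e, he⟩ := h
  have h1 : (tEigen ρ χ).map e.toLinearMap = tEigen σ χ := by
    ext w
    constructor
    · rintro ⟨v, hv, rfl⟩ u
      have := congrArg e (hv u)
      rw [map_smul] at this
      rw [LinearEquiv.coe_coe, ← this]
      exact (he _ _).symm
    · intro hw
      refine ⟨e.symm w, fun u => e.injective ?_, by simp⟩
      have h2 := hw u
      rw [map_smul, LinearEquiv.apply_symm_apply, ← h2]
      refine (he _ _).trans ?_
      rw [LinearEquiv.apply_symm_apply]; rfl
  have h2 : (tTwistKer ρ χ).map e.toLinearMap = tTwistKer σ χ := by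
    unfold tTwistKer tTwistKerT
    rw [Submodule.map_span]
    congr 1
    ext w
    constructor
    · rintro ⟨_, ⟨u, x, rfl⟩, rfl⟩
      refine ⟨u, e x, ?_⟩
      rw [LinearEquiv.coe_coe, map_sub, map_smul]
      congr 1
      exact he _ _
    · rintro ⟨u, x, rfl⟩
      refine ⟨_, ⟨u, e.symm x, rfl⟩, ?_⟩
      rw [LinearEquiv.coe_coe, map_sub, map_smul, LinearEquiv.apply_symm_apply]
      congr 1
      refine (he _ _).trans ?_
      rw [LinearEquiv.apply_symm_apply]; rfl
  have e1 : tEigen ρ χ ≃ₗ[ℂ] tEigen σ χ := (e.submoduleMap _).trans (LinearEquiv.ofEq _ _ h1)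
  have e2 : (V ⧸ tTwistKer ρ χ) ≃ₗ[ℂ] (W ⧸ tTwistKer σ χ) :=
    Submodule.Quotient.equiv _ _ e h2
  obtain ⟨a, b, c⟩ := hs
  refine ⟨Module.Finite.equiv e1.symm, Module.Finite.equiv e2.symm, ?_⟩
  rw [e1.finrank_eq, e2.finrank_eq, c]

end Part3

section Part4
open Aff Filter Topology

variable {K : Type*} [NontriviallyNormedField K]
variable {V : Type*} [AddCommGroup V] [Module ℂ V]

lemma smooth_of {ρ : Rep K V} (hT : ∀ v, ∀ᶠ u : Kˣ in 𝓝 1, ρ (xT u) v = v)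
    (hS : ∀ v, ∃ ε > 0, ∀ b : K, ‖b‖ < ε → ρ (sS b) v = v) : IsSmoothRep ρ := by
  intro v
  rw [isOpen_iff_mem_nhds]
  intro g₀ hg₀
  have hg₀ : ρ g₀ v = v := hg₀
  obtain ⟨ε, hε, hS⟩ := hS v
  have ct : Continuous (fun g : Aff K => g.t) :=
    continuous_fst.comp (continuous_induced_dom (f := fun g : Aff K => ((g.t, g.s) : Kˣ × K)))
  have cs : Continuous (fun g : Aff K => g.s) :=
    continuous_snd.comp (continuous_induced_dom (f := fun g : Aff K => ((g.t, g.s) : Kˣ × K)))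
  have c1 : Continuous (fun g : Aff K => g.t * g₀.t⁻¹) :=
    ct.mul continuous_const
  have c2 : Continuous (fun g : Aff K => g.s - ((g.t * g₀.t⁻¹ : Kˣ) : K) * g₀.s) :=
    cs.sub
      ((Units.continuous_val.comp c1).mul continuous_const)
  have e1 : ∀ᶠ g in 𝓝 g₀, ρ (xT (g.t * g₀.t⁻¹)) v = v := by
    refine c1.continuousAt.eventually (p := fun z => ρ (xT z) v = v) ?_
    beta_reduce; rw [mul_inv_cancel]; exact hT v
  have e2 : ∀ᶠ g in 𝓝 g₀, ‖g.s - ((g.t * g₀.t⁻¹ : Kˣ) : K) * g₀.s‖ < ε := by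
    refine c2.norm.continuousAt.eventually_lt continuousAt_const ?_
    simpa using hε
  filter_upwards [e1, e2] with g h1 h2
  have : g = sS (g.s - ((g.t * g₀.t⁻¹ : Kˣ) : K) * g₀.s) * (xT (g.t * g₀.t⁻¹) * g₀) := by
    ext <;> simp
  show ρ g v = v
  rw [this, map_mul, map_mul, Module.End.mul_apply, Module.End.mul_apply, hg₀, h1]
  exact hS _ h2

lemma orb_lc {ρ : Rep K V} (hρ : IsSmoothRep ρ) (v : V) :
    IsLocallyConstant (fun u : Kˣ => ρ (xT u) v) := by
  rw [IsLocallyConstant.iff_eventually_eq]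
  intro x
  have : ∀ᶠ y in 𝓝 x, ρ (xT (x⁻¹ * y)) v = v := by
    have c : ContinuousAt (fun y : Kˣ => x⁻¹ * y) x := (continuous_const.mul continuous_id).continuousAt
    refine c.eventually (p := fun z => ρ (xT z) v = v) ?_
    beta_reduce; rw [inv_mul_cancel]
    exact (smooth_T hρ v).mem_nhds (rho_xT_one ρ v)
  filter_upwards [this] with y hy
  have := congrArg (ρ (xT x)) hy
  rwa [← rho_xT_mul, mul_inv_cancel_left] at this

lemma chi_lc {χ : Kˣ →* ℂˣ} (hχ : SmoothMulChar χ) : IsLocallyConstant χ := by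
  rw [IsLocallyConstant.iff_eventually_eq]
  intro x
  have : ∀ᶠ y in 𝓝 x, χ (x⁻¹ * y) = 1 := by
    have c : ContinuousAt (fun y : Kˣ => x⁻¹ * y) x := (continuous_const.mul continuous_id).continuousAt
    refine c.eventually (p := fun z => χ z = 1) ?_
    beta_reduce; rw [inv_mul_cancel]
    exact hχ.mem_nhds (map_one χ)
  filter_upwards [this] with y hy
  rw [map_mul, map_inv, inv_mul_eq_one] at hy
  exact hy.symm

lemma norm_lc [IsUltrametricDist K] : IsLocallyConstant (fun u : Kˣ => ‖(u : K)‖) := by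
  rw [IsLocallyConstant.iff_eventually_eq]
  intro x
  have h0 : 0 < ‖(x : K)‖ := by simp
  have : ∀ᶠ y : Kˣ in 𝓝 x, ‖(y : K) - x‖ < ‖(x : K)‖ := by
    have c : Continuous (fun y : Kˣ => ‖(y : K) - x‖) :=
      (Units.continuous_val.sub continuous_const).norm
    refine c.continuousAt.eventually_lt continuousAt_const ?_
    simp
  filter_upwards [this] with y hy
  have h1 := IsUltrametricDist.norm_add_eq_max_of_norm_ne_norm hy.ne
  rw [sub_add_cancel, max_eq_right hy.le] at h1
  exact h1

lemma cs_bounds {f : Kˣ → ℂ} (hf : HasCompactSupport f) :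
    ∃ δ > 0, ∃ R > 0, ∀ x : Kˣ, f x ≠ 0 → δ ≤ ‖(x : K)‖ ∧ ‖(x : K)‖ ≤ R := by
  have hc : IsCompact (tsupport f) := hf
  obtain ⟨R, hR⟩ := hc.exists_bound_of_continuousOn (f := fun x : Kˣ => (x : K))
    Units.continuous_val.continuousOn
  obtain ⟨D, hD⟩ := hc.exists_bound_of_continuousOn (f := fun x : Kˣ => ((x⁻¹ : Kˣ) : K))
    (Units.continuous_val.comp continuous_inv).continuousOn
  refine ⟨(max D 1)⁻¹, by positivity, max R 1, by positivity, fun x hx => ?_⟩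
  have hx' : x ∈ tsupport f := subset_tsupport _ hx
  refine ⟨?_, (hR x hx').trans (le_max_left _ _)⟩
  have h1 := (hD x hx').trans (le_max_left _ 1)
  have h0 : 0 < ‖(x : K)‖ := by simp
  rw [Units.val_inv_eq_inv_val, norm_inv] at h1
  exact inv_le_of_inv_le₀ h0 h1

lemma cs_of_bounds [ProperSpace K] {f : Kˣ → ℂ} {δ R : ℝ} (hδ : 0 < δ)
    (h : ∀ x : Kˣ, f x ≠ 0 → δ ≤ ‖(x : K)‖ ∧ ‖(x : K)‖ ≤ R) : HasCompactSupport f := by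
  refine HasCompactSupport.intro (annulus_compact δ R hδ) fun x hx => ?_
  by_contra h0
  exact hx (h x h0)

lemma SSx_lcT {f : Kˣ → ℂ} (hlc : IsLocallyConstant f) (hf : HasCompactSupport f) :
    ∀ᶠ u : Kˣ in 𝓝 1, ∀ x, f (x * u) = f x := by
  have hc : IsCompact (tsupport f) := hf
  have h1 : ∀ᶠ u : Kˣ in 𝓝 1, ∀ x ∈ tsupport f, f (x * u) = f x := by
    refine hc.eventually_forall_of_forall_eventually (P := fun u x => f (x * u) = f x) ?_
    intro x hx
    have c : Continuous (fun z : Kˣ × Kˣ => z.2 * z.1) := continuous_snd.mul continuous_fst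
    have e1 := (hlc.comp_continuous c).eventually_eq (1, x)
    have e2 := (hlc.comp_continuous (f := fun z : Kˣ × Kˣ => z.2) continuous_snd).eventually_eq (1, x)
    filter_upwards [e1, e2] with z h1 h2
    simp only [Function.comp, mul_one] at h1 h2
    rw [h1, h2]
  have h2 : ∀ᶠ u : Kˣ in 𝓝 1, ∀ x ∈ tsupport f, f (x * u⁻¹) = f x := by
    have := (continuous_inv (G := Kˣ)).continuousAt (x := 1)
    refine this.eventually (p := fun u => ∀ x ∈ tsupport f, f (x * u) = f x) ?_
    beta_reduce; rw [inv_one]; exact h1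
  filter_upwards [h1, h2] with u h1 h2 x
  by_cases hx : x ∈ tsupport f
  · exact h1 x hx
  · by_cases hx' : x * u ∈ tsupport f
    · have := h2 _ hx'
      rw [mul_inv_cancel_right] at this
      exact this.symm
    · rw [image_eq_zero_of_notMem_tsupport hx, image_eq_zero_of_notMem_tsupport hx']

lemma SRep_coe (ψ : AddChar K ℂ) (hψlc : IsLocallyConstant (⇑ψ)) (g : Aff K) (f : SSx K) (x : Kˣ) :
    (SRep ψ hψlc g f).1 x = ψ (g.s * (x : K)) * f.1 (x * g.t) := rfl

lemma SRep_xT (ψ : AddChar K ℂ) (hψlc : IsLocallyConstant (⇑ψ)) (u : Kˣ) (f : SSx K) (x : Kˣ) :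
    (SRep ψ hψlc (xT u) f).1 x = f.1 (x * u) := by
  rw [SRep_coe]; simp

lemma SRep_sS (ψ : AddChar K ℂ) (hψlc : IsLocallyConstant (⇑ψ)) (b : K) (f : SSx K) (x : Kˣ) :
    (SRep ψ hψlc (sS b) f).1 x = ψ (b * x) * f.1 x := by
  rw [SRep_coe]; simp

lemma SRep_smooth [ProperSpace K] (ψ : AddChar K ℂ) (hψlc : IsLocallyConstant (⇑ψ)) :
    IsSmoothRep (SRep ψ hψlc) := by
  refine smooth_of ?_ ?_
  · intro f
    filter_upwards [SSx_lcT f.2.1 f.2.2] with u hu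
    apply Subtype.ext; funext x
    rw [SRep_xT, hu]
  · intro f
    obtain ⟨δ, hδ, R, hR, h⟩ := cs_bounds f.2.2
    obtain ⟨η, hη, hψ⟩ := psi_small ψ hψlc
    refine ⟨η / R, by positivity, fun b hb => ?_⟩
    apply Subtype.ext; funext x
    rw [SRep_sS]
    by_cases hx : f.1 x = 0
    · simp [hx]
    rw [hψ, one_mul]
    rw [norm_mul]
    calc ‖b‖ * ‖(x : K)‖ ≤ η / R * R := by gcongr; exact (h x hx).2
      _ = η := by field_simp

lemma eigen_sInv {ρ : Rep K V} (hρ : IsSmoothRep ρ) {χ : Kˣ →* ℂˣ} {v : V} (hv : v ∈ tEigen ρ χ) :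
    v ∈ sInv ρ := by
  obtain ⟨ε, hε, h⟩ := smooth_S hρ v
  intro b
  obtain ⟨z, hz0, hz1⟩ := NormedField.exists_norm_lt K (r := ε / (‖b‖ + 1)) (by positivity)
  have hz : z ≠ 0 := norm_pos_iff.1 hz0
  have h1 : ρ (sS (z * b)) v = v := by
    apply h
    rw [norm_mul]
    calc ‖z‖ * ‖b‖ ≤ ε / (‖b‖ + 1) * (‖b‖ + 1) := by gcongr; linarith
      _ = ε := by field_simp
  rw [mem_tEigen] at hv
  have h2 := rho_comm ρ (Units.mk0 z hz) b v
  rw [hv, map_smul, Units.val_mk0, h1, ← hv] at h2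
  have h3 := congrArg (ρ (xT (Units.mk0 z hz)⁻¹)) h2
  rwa [← rho_xT_mul, ← rho_xT_mul, inv_mul_cancel, rho_xT_one, rho_xT_one] at h3

lemma SRep_sInv [ProperSpace K] (ψ : AddChar K ℂ) (hψlc : IsLocallyConstant (⇑ψ)) (hψne : ψ ≠ 1) {f : SSx K}
    (hf : f ∈ sInv (SRep ψ hψlc)) : f = 0 := by
  obtain ⟨y, hy, hy0⟩ := psi_ne ψ hψne
  apply Subtype.ext; funext x
  have h1 := congrFun (congrArg Subtype.val (hf (y * (x⁻¹ : Kˣ)))) x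
  rw [SRep_sS, Units.inv_mul_cancel_right] at h1
  have h2 : (ψ y - 1) * f.1 x = 0 := by rw [sub_mul, h1]; ring
  rcases mul_eq_zero.1 h2 with h | h
  · exact absurd (sub_eq_zero.1 h) hy
  · exact h

variable [IsUltrametricDist K] [ProperSpace K]

def f0 {χ : Kˣ →* ℂˣ} (hχ : SmoothMulChar χ) : SSx K :=
  ⟨fun x => if ‖(x : K)‖ = 1 then (χ x : ℂ) else 0, by
    constructor
    · rw [IsLocallyConstant.iff_eventually_eq]
      intro x
      filter_upwards [(norm_lc (K := K)).eventually_eq x, (chi_lc hχ).eventually_eq x] with y h1 h2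
      rw [h1, h2]
    · refine cs_of_bounds (δ := 1) (R := 1) one_pos fun x hx => ?_
      by_cases h : ‖(x : K)‖ = 1
      · rw [h]; simp
      · exact absurd (if_neg h) hx⟩

lemma f0_apply {χ : Kˣ →* ℂˣ} (hχ : SmoothMulChar χ) (x : Kˣ) :
   (f0 hχ).1 x = if ‖(x : K)‖ = 1 then (χ x : ℂ) else 0 := rfl

lemma zpow_norm {ϖ : Kˣ} (hϖ : IsUnif ϖ) (n : ℤ) : ‖((ϖ ^ n : Kˣ) : K)‖ = 1 ↔ n = 0 := by
  rw [Units.val_zpow_eq_zpow_val, norm_zpow]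
  constructor
  · intro h
    exact (zpow_eq_one_iff_right₀ (norm_nonneg _) hϖ.1.ne).1 h
  · rintro rfl; simp

lemma fin_supp {ϖ : Kˣ} (hϖ : IsUnif ϖ) (f : SSx K) :
    ∃ N : ℕ, ∀ n : ℤ, (N : ℤ) < |n| → f.1 (ϖ ^ n) = 0 := by
  obtain ⟨δ, hδ, R, hR, h⟩ := cs_bounds f.2.2
  obtain ⟨N, hN⟩ := exists_pow_lt_of_lt_one (y := ‖(ϖ : K)‖) (x := min δ R⁻¹) (by positivity) hϖ.1
  have h0 : 0 < ‖(ϖ : K)‖ := by simp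
  refine ⟨N, fun n hn => ?_⟩
  by_contra hne
  obtain ⟨h1, h2⟩ := h _ hne
  rw [Units.val_zpow_eq_zpow_val, norm_zpow] at h1 h2
  have hmono : ∀ m : ℕ, N < m → ‖(ϖ : K)‖ ^ m < min δ R⁻¹ := fun m hm =>
    lt_of_le_of_lt (pow_le_pow_of_le_one h0.le hϖ.1.le hm.le) hN
  obtain ⟨m, rfl | rfl⟩ := n.eq_nat_or_neg
  · rw [zpow_natCast] at h1
    have := (hmono m (by simpa using hn)).trans_le (min_le_left _ _)
    linarith
  · rw [zpow_neg, zpow_natCast] at h2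
    have := (hmono m (by simpa using hn)).trans_le (min_le_right _ _)
    have h3 : 0 < ‖(ϖ : K)‖ ^ m := by positivity
    have := (inv_le_comm₀ h3 hR).1 h2
    linarith

lemma AO_expand (ψ : AddChar K ℂ) (hψlc : IsLocallyConstant (⇑ψ)) {χ : Kˣ →* ℂˣ}
    (hχ : SmoothMulChar χ) {ϖ : Kˣ} (hϖ : IsUnif ϖ) (a : SSx K) (ha : a ∈ AO (SRep ψ hψlc) χ) :
    ∃ s : Finset ℤ, a = ∑ n ∈ s, a.1 (ϖ ^ n) • SRep ψ hψlc (xT (ϖ ^ (-n))) (f0 hχ) := by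
  obtain ⟨N, hN⟩ := fin_supp hϖ a
  refine ⟨Finset.Icc (-N) N, ?_⟩
  apply Subtype.ext
  funext x
  obtain ⟨m, o, ho, rfl⟩ := hϖ.2 x
  have h1 : a.1 (ϖ ^ m * o) = χ o * a.1 (ϖ ^ m) := by
    have := congrFun (congrArg Subtype.val (ha o ho)) (ϖ ^ m)
    rw [SRep_xT] at this
    exact this
  have h2 : ∀ n : ℤ, (a.1 (ϖ ^ n) • SRep ψ hψlc (xT (ϖ ^ (-n))) (f0 hχ)).1 (ϖ ^ m * o) =
      if m = n then a.1 (ϖ ^ n) * χ o else 0 := by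
    intro n
    show a.1 (ϖ ^ n) * (SRep ψ hψlc (xT (ϖ ^ (-n))) (f0 hχ)).1 (ϖ ^ m * o) = _
    rw [SRep_xT, f0_apply, mul_right_comm, ← zpow_add, Units.val_mul, norm_mul, ho, mul_one]
    simp only [zpow_norm hϖ]
    by_cases h : m = n
    · subst h; simp
    · have : ¬ (m + -n = 0) := by omega
      rw [if_neg this, if_neg h, mul_zero]
  rw [h1, AddSubmonoidClass.coe_finset_sum, Finset.sum_apply]
  rw [Finset.sum_congr rfl (fun n _ => h2 n), Finset.sum_ite_eq]
  split_ifs with h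
  · rw [mul_comm]
  · rw [hN m, mul_zero]
    rw [Finset.mem_Icc, ← abs_le] at h
    omega

lemma f0_not (ψ : AddChar K ℂ) (hψlc : IsLocallyConstant (⇑ψ)) {χ : Kˣ →* ℂˣ}
    (hχ : SmoothMulChar χ) {ϖ : Kˣ} (hϖ : IsUnif ϖ) : f0 hχ ∉ tTwistKer (SRep ψ hψlc) χ := by
  have hA : f0 hχ ∈ AO (SRep ψ hψlc) χ := by
    intro u hu
    apply Subtype.ext; funext x
    rw [SRep_xT, f0_apply, Units.val_mul, norm_mul, hu, mul_one]
    show _ = (χ u : ℂ) * (f0 hχ).1 x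
    rw [f0_apply, map_mul, Units.val_mul, mul_comm]
    split_ifs <;> simp
  intro h
  obtain ⟨d, hd⟩ := (tw_range (SRep_smooth ψ hψlc) hχ hϖ ⟨f0 hχ, hA⟩).1 h
  have hd' := congrArg Subtype.val hd
  rw [DO_apply] at hd'
  obtain ⟨N, hN⟩ := fin_supp hϖ d.1
  have rec1 : ∀ n : ℤ, d.1.1 (ϖ ^ (n + 1)) - χ ϖ * d.1.1 (ϖ ^ n) = if n = 0 then 1 else 0 := by
    intro n
    have := congrFun (congrArg Subtype.val hd') (ϖ ^ n)
    rw [f0_apply] at this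
    simp only [zpow_norm hϖ] at this
    rw [show (if n = 0 then (1 : ℂ) else 0) = (if n = 0 then ((χ (ϖ ^ n) : ℂˣ) : ℂ) else 0) by
      split_ifs with h
      · subst h; simp
      · rfl]
    rw [← this]
    show _ = (SRep ψ hψlc (xT ϖ) d.1).1 (ϖ ^ n) - χ ϖ * d.1.1 (ϖ ^ n)
    rw [SRep_xT, zpow_add_one]
  have hz : (χ ϖ : ℂ) ≠ 0 := (χ ϖ).ne_zero
  have hup : ∀ k : ℕ, d.1.1 (ϖ ^ ((N : ℤ) + 1 - k)) = 0 ∨ (N : ℤ) + 1 - k < 1 := by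
    intro k
    induction k with
    | zero => left; apply hN; simp; rw [abs_of_nonneg] <;> omega
    | succ k ih =>
      rcases ih with ih | ih
      · by_cases hk : (N : ℤ) + 1 - (k + 1 : ℕ) < 1
        · right; exact hk
        · left
          have := rec1 ((N : ℤ) + 1 - (k + 1 : ℕ))
          rw [if_neg (by omega), show (N : ℤ) + 1 - (k + 1 : ℕ) + 1 = N + 1 - k by push_cast; ring,
            ih, zero_sub, neg_eq_zero] at this
          exact (mul_eq_zero.1 this).resolve_left hz
      · right; push_cast; omega
  have h1 : d.1.1 (ϖ ^ (1 : ℤ)) = 0 := by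
    rcases hup N with h | h
    · convert h using 3; ring
    · omega
  have hdn : ∀ k : ℕ, d.1.1 (ϖ ^ (-(N : ℤ) - 1 + k)) = 0 ∨ 0 < -(N : ℤ) - 1 + k := by
    intro k
    induction k with
    | zero =>
      left; apply hN
      rw [abs_of_nonpos] <;> simp
    | succ k ih =>
      rcases ih with ih | ih
      · by_cases hk : 0 < -(N : ℤ) - 1 + (k + 1 : ℕ)
        · right; exact hk
        · left
          have := rec1 (-(N : ℤ) - 1 + k)
          rw [if_neg (by push_cast at hk; omega), ih, mul_zero, sub_zero] at this
          convert this using 3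
          push_cast; ring
      · right; push_cast; omega
  have h0 : d.1.1 (ϖ ^ (0 : ℤ)) = 0 := by
    rcases hdn (N + 1) with h | h
    · convert h using 3; push_cast; ring
    · push_cast at h; omega
  have := rec1 0
  rw [zero_add, h1, h0] at this
  simp at this

lemma repIdx_S (ψ : AddChar K ℂ) (hψlc : IsLocallyConstant (⇑ψ)) (hψne : ψ ≠ 1) {χ : Kˣ →* ℂˣ}
    (hχ : SmoothMulChar χ) : RepIdx (SRep ψ hψlc) χ 1 := by
  obtain ⟨ϖ, hϖ⟩ := exists_unif K
  have hϖ : IsUnif ϖ := hϖ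
  have e0 : tEigen (SRep ψ hψlc) χ = ⊥ := by
    rw [eq_bot_iff]
    intro f hf
    exact SRep_sInv ψ hψlc hψne (eigen_sInv (SRep_smooth ψ hψlc) hf)
  have e1 : Module.finrank ℂ (SSx K ⧸ tTwistKer (SRep ψ hψlc) χ) = 1 := by
    refine finrank_eq_one (Submodule.Quotient.mk (f0 hχ)) ?_ ?_
    · rw [Ne, Submodule.Quotient.mk_eq_zero]
      exact f0_not ψ hψlc hχ hϖ
    · intro w
      obtain ⟨f, rfl⟩ := Submodule.Quotient.mk_surjective _ w
      obtain ⟨a, ha, hk⟩ := T_decomp (SRep_smooth ψ hψlc) χ hχ f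
      obtain ⟨s, hs⟩ := AO_expand ψ hψlc hχ hϖ a ha
      refine ⟨∑ n ∈ s, a.1 (ϖ ^ n) * χ (ϖ ^ (-n)), ?_⟩
      have h1 : (Submodule.Quotient.mk f : SSx K ⧸ tTwistKer (SRep ψ hψlc) χ)
          = Submodule.Quotient.mk a := by
        rw [Submodule.Quotient.eq]
        exact KO_le _ _ hk
      rw [h1, ← Submodule.Quotient.mk_smul, eq_comm, Submodule.Quotient.eq]
      have hs2 : a - (∑ n ∈ s, a.1 (ϖ ^ n) * χ (ϖ ^ (-n)) : ℂ) • f0 hχ =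
          ∑ n ∈ s, a.1 (ϖ ^ n) • SRep ψ hψlc (xT (ϖ ^ (-n))) (f0 hχ)
            - (∑ n ∈ s, a.1 (ϖ ^ n) * χ (ϖ ^ (-n)) : ℂ) • f0 hχ := by rw [← hs]
      rw [hs2, Finset.sum_smul, ← Finset.sum_sub_distrib]
      refine Submodule.sum_mem _ fun n _ => ?_
      rw [mul_smul]
      have h5 := Submodule.smul_mem _ (a.1 (ϖ ^ n))
        (tw_mem (SRep ψ hψlc) χ (ϖ ^ (-n)) (f0 hχ))
      rw [smul_sub] at h5
      exact h5
  refine ⟨?_, ?_, ?_⟩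
  · rw [e0]; infer_instance
  · exact Module.finite_of_finrank_eq_succ e1
  · rw [e1, e0]; simp

end Part4

section Part5
open Aff Filter Topology

lemma exists_eig {V : Type*} [AddCommGroup V] [Module ℂ V] (f : V →ₗ[ℂ] V) :
    ∀ (n : ℕ) (p : Polynomial ℂ) (v : V), p.natDegree ≤ n → p ≠ 0 → v ≠ 0 →
      Polynomial.aeval f p v = 0 → ∃ (μ : ℂ) (w : V), w ≠ 0 ∧ f w = μ • w := by
  have base : ∀ (p : Polynomial ℂ) (v : V), p.natDegree = 0 → p ≠ 0 → v ≠ 0 →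
      Polynomial.aeval f p v = 0 → False := by
    intro p v h hp hv h0
    rw [Polynomial.natDegree_eq_zero] at h
    obtain ⟨c, rfl⟩ := h
    rw [Polynomial.aeval_C, Module.algebraMap_end_apply] at h0
    rcases smul_eq_zero.1 h0 with h | h
    · exact hp (by rw [h, map_zero])
    · exact hv h
  intro n
  induction n with
  | zero => intro p v h hp hv h0; exact (base p v (by omega) hp hv h0).elim
  | succ n ih =>
    intro p v h hp hv h0
    by_cases hd : p.natDegree = 0
    · exact (base p v hd hp hv h0).elim
    obtain ⟨r, hr⟩ := IsAlgClosed.exists_root p (by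
      intro h'; apply hd; exact Polynomial.natDegree_eq_of_degree_eq_some h')
    obtain ⟨q, rfl⟩ := Polynomial.dvd_iff_isRoot.2 hr
    have hq : q ≠ 0 := right_ne_zero_of_mul hp
    by_cases hw : Polynomial.aeval f q v = 0
    · refine ih q v ?_ hq hv hw
      rw [Polynomial.natDegree_mul (left_ne_zero_of_mul hp) hq, Polynomial.natDegree_X_sub_C] at h
      omega
    · refine ⟨r, _, hw, ?_⟩
      rw [map_mul, Module.End.mul_apply, map_sub, Polynomial.aeval_X, Polynomial.aeval_C,
        LinearMap.sub_apply, Module.algebraMap_end_apply, sub_eq_zero] at h0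
      exact h0

variable {K : Type*} [NontriviallyNormedField K]
variable {V : Type*} [AddCommGroup V] [Module ℂ V]

lemma inv_of_T {ρ : Rep K V} (hS : ∀ b v, ρ (sS b) v = v) {U : Submodule ℂ V}
    (hU : ∀ u v, v ∈ U → ρ (xT u) v ∈ U) : GRep.Invariant ρ U := by
  intro g v hv
  rw [rho_decomp, hS]
  exact hU _ _ hv

lemma scalar_of_eig {ρ : Rep K V} (hS : ∀ b v, ρ (sS b) v = v) (hirr : GRep.Irred ρ) (u : Kˣ)
    (μ : ℂ) (w : V) (hw : w ≠ 0) (h : ρ (xT u) w = μ • w) : ∀ v, ρ (xT u) v = μ • v := by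
  let U : Submodule ℂ V := LinearMap.ker (ρ (xT u) - μ • LinearMap.id)
  have hU : ∀ v, v ∈ U ↔ ρ (xT u) v = μ • v := by
    intro v
    rw [LinearMap.mem_ker, LinearMap.sub_apply, sub_eq_zero]; rfl
  have hi : GRep.Invariant ρ U := by
    refine inv_of_T hS fun u' v hv => ?_
    rw [hU] at hv ⊢
    rw [rho_xT_comm, hv, map_smul]
  rcases hirr.2 U hi with h1 | h1
  · have : w ∈ U := (hU w).2 h
    rw [h1] at this
    exact absurd this hw
  · intro v
    rw [← hU, h1]; trivial

variable [IsUltrametricDist K] [ProperSpace K]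

lemma scalar_O {ρ : Rep K V} (hρ : IsSmoothRep ρ) (hS : ∀ b v, ρ (sS b) v = v)
    (hirr : GRep.Irred ρ) (u : Kˣ) (hu : ‖(u : K)‖ = 1) : ∃ μ : ℂ, ∀ v, ρ (xT u) v = μ • v := by
  obtain ⟨v₀, hv₀⟩ := @exists_ne V hirr.1 0
  let H : Subgroup (oSub K) :=
    { carrier := {g | ρ (xT g.1) v₀ = v₀}
      one_mem' := rho_xT_one ρ v₀
      mul_mem' := by
        intro a b ha hb
        show ρ (xT (a.1 * b.1)) v₀ = v₀
        have ha : ρ (xT a.1) v₀ = v₀ := ha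
        have hb : ρ (xT b.1) v₀ = v₀ := hb
        rw [rho_xT_mul, hb, ha]
      inv_mem' := by
        intro a ha
        have ha : ρ (xT a.1) v₀ = v₀ := ha
        show ρ (xT a.1⁻¹) v₀ = v₀
        conv_lhs => rw [← ha]
        rw [← rho_xT_mul, inv_mul_cancel, rho_xT_one] }
  have hopen : IsOpen (H : Set (oSub K)) := (smooth_T hρ v₀).preimage continuous_subtype_val
  have hfin : Finite (oSub K ⧸ H) := H.quotient_finite_of_isOpen hopen
  have hidx : H.index ≠ 0 := Subgroup.index_ne_zero_iff_finite.2 hfin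
  obtain ⟨n, hn, -, hmem⟩ := Subgroup.exists_pow_mem_of_index_ne_zero hidx (⟨u, hu⟩ : oSub K)
  have hpow : ∀ (m : ℕ) v, ((ρ (xT u)) ^ m) v = ρ (xT (u ^ m)) v := by
    intro m v
    rw [← map_pow]; congr 2
    exact (map_pow (xTHom : Kˣ →* Aff K) u m).symm
  have h1 : ρ (xT (u ^ n)) v₀ = v₀ := hmem
  have hp : (Polynomial.X ^ n - 1 : Polynomial ℂ) ≠ 0 :=
    (Polynomial.monic_X_pow_sub_C (1 : ℂ) hn.ne').ne_zero
  obtain ⟨μ, w, hw, h⟩ := exists_eig (ρ (xT u)) _ (Polynomial.X ^ n - 1) v₀ le_rfl hp hv₀ (by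
    rw [map_sub, map_pow, Polynomial.aeval_X, map_one, LinearMap.sub_apply, hpow, h1]
    simp)
  exact ⟨μ, scalar_of_eig hS hirr u μ w hw h⟩

lemma scalar_unif {ρ : Rep K V} (hρ : IsSmoothRep ρ) (hS : ∀ b v, ρ (sS b) v = v)
    (hirr : GRep.Irred ρ) {ϖ : Kˣ} (hϖ : IsUnif ϖ) : ∃ μ : ℂ, ∀ v, ρ (xT ϖ) v = μ • v := by
  obtain ⟨v₀, hv₀⟩ := @exists_ne V hirr.1 0
  set f := ρ (xT ϖ) with hf
  by_cases hw : f v₀ - v₀ = 0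
  · exact ⟨1, scalar_of_eig hS hirr ϖ 1 v₀ hv₀ (by rw [one_smul]; exact sub_eq_zero.1 hw)⟩
  set w := f v₀ - v₀ with hwdef
  let U : Submodule ℂ V :=
    { carrier := {x | ∃ (m : ℕ) (q : Polynomial ℂ), (f ^ m) x = Polynomial.aeval f q w}
      zero_mem' := ⟨0, 0, by simp⟩
      add_mem' := by
        rintro x y ⟨m, q, h⟩ ⟨m', q', h'⟩
        refine ⟨m + m', Polynomial.X ^ m' * q + Polynomial.X ^ m * q', ?_⟩
        simp only [map_add, map_mul, map_pow, Polynomial.aeval_X, LinearMap.add_apply,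
          Module.End.mul_apply]
        rw [← h, ← h', ← Module.End.mul_apply, ← Module.End.mul_apply, ← pow_add, ← pow_add,
          add_comm m']
      smul_mem' := by
        rintro c x ⟨m, q, h⟩
        refine ⟨m, c • q, ?_⟩
        rw [map_smul, map_smul, h]; rfl }
  have hU : ∀ x, x ∈ U ↔ ∃ (m : ℕ) (q : Polynomial ℂ), (f ^ m) x = Polynomial.aeval f q w :=
    fun x => Iff.rfl
  have hfU : ∀ x ∈ U, f x ∈ U := by
    rintro x ⟨m, q, h⟩
    refine ⟨m, Polynomial.X * q, ?_⟩
    rw [map_mul, Polynomial.aeval_X, Module.End.mul_apply, ← h, ← Module.End.mul_apply,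
      ← Module.End.mul_apply, ← pow_succ, ← pow_succ']
  have hfU' : ∀ x ∈ U, ρ (xT ϖ⁻¹) x ∈ U := by
    rintro x ⟨m, q, h⟩
    refine ⟨m + 1, q, ?_⟩
    rw [← h, pow_succ, Module.End.mul_apply, hf, ← rho_xT_mul, mul_inv_cancel, rho_xT_one]
  have hz : ∀ (n : ℤ), ∀ x ∈ U, ρ (xT (ϖ ^ n)) x ∈ U := by
    intro n
    induction n with
    | zero => intro x hx; rw [zpow_zero, rho_xT_one]; exact hx
    | succ n ih =>
      intro x hx
      rw [zpow_add_one, rho_xT_mul]; exact ih _ (hfU x hx)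
    | pred n ih =>
      intro x hx
      rw [zpow_sub_one, rho_xT_mul]; exact ih _ (hfU' x hx)
  have hi : GRep.Invariant ρ U := by
    refine inv_of_T hS fun u x hx => ?_
    obtain ⟨n, o, ho, rfl⟩ := hϖ.2 u
    obtain ⟨μ, hμ⟩ := scalar_O hρ hS hirr o ho
    rw [rho_xT_mul, hμ, map_smul]
    exact U.smul_mem _ (hz n x hx)
  have hwU : w ∈ U := ⟨0, 1, by simp⟩
  rcases hirr.2 U hi with h1 | h1
  · rw [h1] at hwU; exact absurd hwU hw
  have hv : v₀ ∈ U := by rw [h1]; trivial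
  obtain ⟨m, q, h⟩ := hv
  have hp : (Polynomial.X ^ m - q * (Polynomial.X - 1) : Polynomial ℂ) ≠ 0 := by
    intro h
    have := congrArg (Polynomial.eval 1) h
    simp at this
  obtain ⟨μ, w', hw', h⟩ := exists_eig f _ (Polynomial.X ^ m - q * (Polynomial.X - 1))
    v₀ le_rfl hp hv₀ (by
    rw [map_sub, map_mul, map_pow, map_sub, Polynomial.aeval_X, map_one, LinearMap.sub_apply,
      Module.End.mul_apply, LinearMap.sub_apply, h, Module.End.one_apply, ← hwdef, sub_self])
  exact ⟨μ, scalar_of_eig hS hirr ϖ μ w' hw' h⟩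

lemma triv_irred {ρ : Rep K V} (hρ : IsSmoothRep ρ) (hS : ∀ b v, ρ (sS b) v = v)
    (hirr : GRep.Irred ρ) :
    Module.Finite ℂ V ∧ ∃ χ : Kˣ →* ℂˣ, SmoothMulChar χ ∧ ∃ v : V, v ≠ 0 ∧ v ∈ tEigen ρ χ := by
  obtain ⟨v₀, hv₀⟩ := @exists_ne V hirr.1 0
  obtain ⟨ϖ, hϖ⟩ := exists_unif K
  have hϖ : IsUnif ϖ := hϖ
  have hsc : ∀ u : Kˣ, ∃ μ : ℂ, ρ (xT u) v₀ = μ • v₀ := by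
    obtain ⟨z, hz⟩ := scalar_unif hρ hS hirr hϖ
    have hz0 : z ≠ 0 := by
      rintro rfl
      have h1 := hz (ρ (xT ϖ⁻¹) v₀)
      rw [← rho_xT_mul, mul_inv_cancel, rho_xT_one, zero_smul] at h1
      exact hv₀ h1
    have hz' : ∀ n : ℤ, ∃ μ : ℂ, ρ (xT (ϖ ^ n)) v₀ = μ • v₀ := by
      intro n
      induction n with
      | zero => exact ⟨1, by rw [zpow_zero, rho_xT_one, one_smul]⟩
      | succ n ih =>
        obtain ⟨μ, h⟩ := ih
        exact ⟨z * μ, by rw [zpow_add_one, rho_xT_mul, hz, map_smul, h, smul_smul]⟩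
      | pred n ih =>
        obtain ⟨μ, h⟩ := ih
        refine ⟨z⁻¹ * μ, ?_⟩
        have h2 := hz (ρ (xT (ϖ ^ (-(n : ℤ) - 1))) v₀)
        rw [← rho_xT_mul, mul_comm, ← zpow_add_one, sub_add_cancel, h] at h2
        rw [mul_smul, h2, smul_smul, inv_mul_cancel₀ hz0, one_smul]
    intro u
    obtain ⟨n, o, ho, rfl⟩ := hϖ.2 u
    obtain ⟨μ, hμ⟩ := scalar_O hρ hS hirr o ho
    obtain ⟨μ', hμ'⟩ := hz' n
    exact ⟨μ * μ', by rw [rho_xT_mul, hμ, map_smul, hμ', smul_smul]⟩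
  choose a ha using hsc
  have hinj : ∀ x y : ℂ, x • v₀ = y • v₀ → x = y := fun x y h => smul_left_injective ℂ hv₀ h
  let A : Kˣ →* ℂ :=
    { toFun := a
      map_one' := hinj _ _ (by rw [← ha, rho_xT_one, one_smul])
      map_mul' := fun u u' => hinj _ _ (by
        rw [← ha, rho_xT_mul, ha, map_smul, ha, smul_smul, mul_comm]) }
  refine ⟨?_, A.toHomUnits, ?_, v₀, hv₀, fun u => ha u⟩
  · have hi : GRep.Invariant ρ (Submodule.span ℂ {v₀}) := by
      refine inv_of_T hS fun u v hv => ?_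
      obtain ⟨c, rfl⟩ := Submodule.mem_span_singleton.1 hv
      rw [map_smul, ha, smul_smul]
      exact Submodule.smul_mem _ _ (Submodule.mem_span_singleton_self _)
    rcases hirr.2 _ hi with h | h
    · rw [Submodule.span_singleton_eq_bot] at h
      exact absurd h hv₀
    · exact ⟨⟨{v₀}, by simpa using h⟩⟩
  · have : {u : Kˣ | A.toHomUnits u = 1} = {u : Kˣ | ρ (xT u) v₀ = v₀} := by
      ext u
      show A.toHomUnits u = 1 ↔ ρ (xT u) v₀ = v₀
      rw [ha, Units.ext_iff]
      show a u = 1 ↔ _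
      constructor
      · intro h; rw [h, one_smul]
      · intro h; apply hinj; rw [h, one_smul]
    unfold SmoothMulChar
    rw [this]
    exact smooth_T hρ v₀

end Part5

section Part6
open Aff Filter Topology

variable {K : Type*} [NontriviallyNormedField K]
variable {V : Type*} [AddCommGroup V] [Module ℂ V]

lemma Kr_xT {ρ : Rep K V} {ψ : AddChar K ℂ} (a : Kˣ) {r : ℝ} {w : V} (hw : w ∈ Kr ρ ψ 1 r) :
    ρ (xT a⁻¹) w ∈ Kr ρ ψ a (r / ‖(a : K)‖) := by
  have : Kr ρ ψ 1 r ≤ (Kr ρ ψ a (r / ‖(a : K)‖)).comap (ρ (xT a⁻¹)) := by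
    refine Submodule.span_le.2 ?_
    rintro w ⟨b, v, hb, rfl⟩
    rw [SetLike.mem_coe, Submodule.mem_comap, map_sub, rho_comm, map_smul]
    refine Submodule.subset_span ⟨((a⁻¹ : Kˣ) : K) * b, ρ (xT a⁻¹) v, ?_, ?_⟩
    · rw [norm_mul, Units.val_inv_eq_inv_val, norm_inv, div_eq_inv_mul]
      gcongr
    · rw [one_mul, Units.mul_inv_cancel_left]
  exact this hw

lemma tw_Kr {ρ : Rep K V} {ψ : AddChar K ℂ} {w : V} (hw : w ∈ sTwistKer ρ ψ) :
    ∃ r ≥ 0, w ∈ Kr ρ ψ 1 r := by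
  refine Submodule.span_induction ?_ ?_ ?_ ?_ hw
  · rintro w ⟨b, v, rfl⟩
    exact ⟨‖b‖, norm_nonneg _, Submodule.subset_span ⟨b, v, le_rfl, by rw [one_mul]⟩⟩
  · exact ⟨0, le_rfl, Submodule.zero_mem _⟩
  · rintro x y _ _ ⟨r, hr, h⟩ ⟨r', hr', h'⟩
    exact ⟨max r r', le_max_of_le_left hr, Submodule.add_mem _ (Kr_mono _ _ _ (le_max_left _ _) h)
      (Kr_mono _ _ _ (le_max_right _ _) h')⟩
  · rintro c x _ ⟨r, hr, h⟩
    exact ⟨r, hr, Submodule.smul_mem _ _ h⟩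

lemma Kr_unif [ProperSpace K] {ρ : Rep K V} (hρ : IsSmoothRep ρ) {ψ : AddChar K ℂ}
    (htop : sTwistKer ρ ψ = ⊤) (v : V)
    (δ R : ℝ) (hδ : 0 < δ) : ∃ r ≥ 0, ∀ a : Kˣ, δ ≤ ‖(a : K)‖ → ‖(a : K)‖ ≤ R →
      v ∈ Kr ρ ψ a r := by
  have : ∃ r ≥ 0, ∀ a ∈ {u : Kˣ | δ ≤ ‖(u : K)‖ ∧ ‖(u : K)‖ ≤ R}, ρ (xT a) v ∈ Kr ρ ψ 1 r := by
    refine (annulus_compact δ R hδ).induction_on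
      (p := fun s => ∃ r ≥ 0, ∀ a ∈ s, ρ (xT a) v ∈ Kr ρ ψ 1 r) ?_ ?_ ?_ ?_
    · exact ⟨0, le_rfl, by simp⟩
    · rintro s t hst ⟨r, hr, h⟩
      exact ⟨r, hr, fun a ha => h a (hst ha)⟩
    · rintro s t ⟨r, hr, h⟩ ⟨r', hr', h'⟩
      refine ⟨max r r', le_max_of_le_left hr, ?_⟩
      rintro a (ha | ha)
      · exact Kr_mono _ _ _ (le_max_left _ _) (h a ha)
      · exact Kr_mono _ _ _ (le_max_right _ _) (h' a ha)
    · intro x _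
      obtain ⟨r, hr, h⟩ := tw_Kr (ρ := ρ) (ψ := ψ) (w := ρ (xT x) v) (by rw [htop]; trivial)
      refine ⟨_, mem_nhdsWithin_of_mem_nhds ((orb_lc hρ v).eventually_eq x), r, hr, ?_⟩
      intro a ha
      have ha : ρ (xT a) v = ρ (xT x) v := ha
      rw [ha]; exact h
  obtain ⟨r, hr, h⟩ := this
  refine ⟨r / δ, by positivity, fun a h1 h2 => ?_⟩
  have h3 := Kr_xT a (h a ⟨h1, h2⟩)
  rw [← rho_xT_mul, inv_mul_cancel, rho_xT_one] at h3
  refine Kr_mono _ _ _ ?_ h3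
  gcongr

variable [IsUltrametricDist K]

def hs (K : Type*) [NontriviallyNormedField K] [IsUltrametricDist K] (r : ℝ) (hr : 0 ≤ r)
    (e : ℝ) (he : 0 < e) : Subgroup (Multiplicative (bl K r hr)) where
  carrier := {g | ‖(g.toAdd : K)‖ ≤ e}
  one_mem' := by simpa using he.le
  mul_mem' {a b} ha hb := (bl K e he.le).add_mem ha hb
  inv_mem' {a} ha := (bl K e he.le).neg_mem ha

lemma mem_hs (r : ℝ) (hr : 0 ≤ r) (e : ℝ) (he : 0 < e) (g : Multiplicative (bl K r hr)) :
    g ∈ hs K r hr e he ↔ ‖(g.toAdd : K)‖ ≤ e := Iff.rfl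

instance [ProperSpace K] (r : ℝ) (hr : 0 ≤ r) (e : ℝ) (he : 0 < e) :
    Fintype (Multiplicative (bl K r hr) ⧸ hs K r hr e he) := by
  have c1 : Continuous (fun g : Multiplicative (bl K r hr) => (g.toAdd : K)) :=
      continuous_subtype_val.comp continuous_toAdd
  have hopen : IsOpen (hs K r hr e he : Set (Multiplicative (bl K r hr))) := by
    refine Subgroup.isOpen_of_mem_nhds _ (g := 1) ?_
    have : ∀ᶠ g in 𝓝 (1 : Multiplicative (bl K r hr)), ‖(g.toAdd : K)‖ < e :=
      c1.norm.continuousAt.eventually_lt continuousAt_const (by simpa using he)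
    filter_upwards [this] with g hg
    exact hg.le
  have := (hs K r hr e he).quotient_finite_of_isOpen hopen
  exact Fintype.ofFinite _

variable [ProperSpace K]

lemma char_sum (ψ : AddChar K ℂ) (q : K) (R : ℝ) (hR : 0 ≤ R) (e : ℝ) (he : 0 < e)
    (h : ∀ b : K, ‖b‖ ≤ e → ψ (-(q * b)) = 1) :
    ∃ n : ℕ, (∑ j : Multiplicative (bl K R hR) ⧸ hs K R hR e he, ψ (-(q * (j.out.toAdd : K)))) = n ∧
      ((n = 0 ∧ ∃ b, ‖b‖ ≤ R ∧ ψ (-(q * b)) ≠ 1) ∨ (0 < n ∧ ∀ b, ‖b‖ ≤ R → ψ (-(q * b)) = 1)) := by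
  by_cases hq : ∀ b, ‖b‖ ≤ R → ψ (-(q * b)) = 1
  · refine ⟨Fintype.card (Multiplicative (bl K R hR) ⧸ hs K R hR e he), ?_,
      Or.inr ⟨Fintype.card_pos, hq⟩⟩
    rw [Finset.sum_congr rfl (fun j _ => hq _ (j.out.toAdd).2)]
    simp
  · push Not at hq
    obtain ⟨b, hb, hb1⟩ := hq
    refine ⟨0, ?_, Or.inl ⟨rfl, b, hb, hb1⟩⟩
    have h1 := avgSum_inv (tauS (Representation.trivial ℂ (Aff K) ℂ) ψ q R hR) (hs K R hR e he)
      (1 : ℂ) (by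
        intro g hg
        rw [tauS_apply, h _ hg, one_smul]; simp) (Multiplicative.ofAdd ⟨b, hb⟩)
    have h2 : avgSum (tauS (Representation.trivial ℂ (Aff K) ℂ) ψ q R hR) (hs K R hR e he) (1 : ℂ)
      = ∑ j : Multiplicative (bl K R hR) ⧸ hs K R hR e he, ψ (-(q * (j.out.toAdd : K))) := by
      unfold avgSum
      refine Finset.sum_congr rfl fun j _ => ?_
      rw [tauS_apply]; simp
    rw [h2, tauS_apply] at h1
    simp only [Representation.trivial_apply, smul_eq_mul, toAdd_ofAdd] at h1
    have h3 : (ψ (-(q * b)) - 1) * (∑ j : Multiplicative (bl K R hR) ⧸ hs K R hR e he,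
        ψ (-(q * (j.out.toAdd : K)))) = 0 := by rw [sub_mul, h1]; ring
    rw [(mul_eq_zero.1 h3).resolve_left (sub_ne_zero.2 hb1)]; simp

lemma tw_top {ρ : Rep K V} (hρ : IsSmoothRep ρ) {ψ : AddChar K ℂ}
    (hψlc : IsLocallyConstant (⇑ψ)) (hψne : ψ ≠ 1)
    (htop : sTwistKer ρ ψ = ⊤) (v : V) (b₀ : K) : ρ (sS b₀) v = v := by
  obtain ⟨ε, hε, hv⟩ := smooth_S hρ v
  obtain ⟨η, hη, hη1⟩ := psi_small ψ hψlc
  obtain ⟨y, hy, hy0⟩ := psi_ne ψ hψne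
  have hy0' : 0 < ‖y‖ := norm_pos_iff.2 hy0
  set R : ℝ := ‖y‖ / ε with hRdef
  have hR : 0 < R := by positivity
  have hRε : ∀ q : K, (∀ b, ‖b‖ ≤ R → ψ (-(q * b)) = 1) → ‖q‖ ≤ ε := by
    intro q h
    by_contra hlt
    push Not at hlt
    have hq0 : 0 < ‖q‖ := hε.trans hlt
    have hq : q ≠ 0 := norm_pos_iff.1 hq0
    have h1 := h (-(y / q)) (by
      rw [norm_neg, norm_div, hRdef]; gcongr)
    rw [mul_neg, neg_neg, mul_div_cancel₀ _ hq] at h1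
    exact hy h1
  set δ₀ : ℝ := η / (‖b₀‖ + 1) with hδdef
  have hδ₀ : 0 < δ₀ := by positivity
  obtain ⟨r₀, hr₀, hK₀⟩ := Kr_unif hρ htop v δ₀ R hδ₀
  set r : ℝ := max r₀ ‖b₀‖ with hrdef
  have hr : 0 ≤ r := le_max_of_le_left hr₀
  have hK : ∀ a : K, δ₀ ≤ ‖a‖ → ‖a‖ ≤ R → v ∈ Kr ρ ψ a r := by
    intro a h1 h2
    have ha : a ≠ 0 := norm_pos_iff.1 (hδ₀.trans_le h1)
    exact Kr_mono _ _ _ (le_max_left _ _) (hK₀ (Units.mk0 a ha) h1 h2)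
  set e : ℝ := min ε (η / R) with hedef
  have he : 0 < e := by positivity
  set d : ℝ := η / (r + 1) with hddef
  have hd : 0 < d := by positivity
  have small : ∀ x z : K, ∀ X Z : ℝ, 0 ≤ X → ‖x‖ ≤ X → ‖z‖ ≤ Z → X * Z ≤ η → ψ (-(x * z)) = 1 := by
    intro x z X Z hX hx hz h
    apply hη1
    rw [norm_neg, norm_mul]
    exact (mul_le_mul hx hz (norm_nonneg _) hX).trans h
  let T : K → V := fun j => avgSum (tauS ρ ψ j r hr) (hs K r hr e he) v
  have hTA : ∀ j : K, ‖j‖ ≤ R → T j ∈ Ar ρ ψ j r := by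
    intro j hj
    rw [← tauS_inv ρ ψ j r hr]
    intro g
    refine avgSum_inv _ _ v ?_ g
    intro h hh
    rw [mem_hs] at hh
    rw [tauS_apply, hv _ (hh.trans (min_le_left _ _)), small j _ R (η / R) hR.le hj
      (hh.trans (min_le_right _ _)) (by field_simp; exact le_rfl), one_smul]
  have hT0 : ∀ j : K, ‖j‖ ≤ R → ρ (sS b₀) (T j) = T j := by
    intro j hj
    by_cases hj0 : δ₀ ≤ ‖j‖
    · have h1 : T j ∈ Kr ρ ψ j r := by
        have h2 := avgSum_sub_mem (tauS ρ ψ j r hr) (hs K r hr e he) v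
        rw [tauS_co] at h2
        have h3 := Submodule.add_mem _ h2
          (Submodule.smul_mem _ (Fintype.card (Multiplicative (bl K r hr) ⧸ hs K r hr e he) : ℂ)
            (hK j hj0 hj))
        rwa [sub_add_cancel] at h3
      have h4 : T j = 0 := S_disj hρ ψ hψlc j r hr (hTA j hj) h1
      rw [h4, map_zero]
    · push Not at hj0
      rw [hTA j hj b₀ (le_max_right _ _), hη1, one_smul]
      rw [norm_mul]
      calc ‖j‖ * ‖b₀‖ ≤ η / (‖b₀‖ + 1) * (‖b₀‖ + 1) := by
            apply mul_le_mul hj0.le _ (norm_nonneg _) hδ₀.le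
            linarith
        _ = η := by field_simp
  -- Fourier inversion
  have hc : ∀ q : Multiplicative (bl K r hr) ⧸ hs K r hr e he, _ := fun q =>
    char_sum ψ (q.out.toAdd : K) R hR.le d hd (fun b hb =>
      small _ b r d hr (q.out.toAdd).2 hb (by
        rw [hddef, mul_div_assoc', div_le_iff₀ (by positivity)]; nlinarith))
  choose n hn hn' using hc
  have hsum : (∑ j : Multiplicative (bl K R hR.le) ⧸ hs K R hR.le d hd, T (j.out.toAdd : K))
      = ((∑ q, n q : ℕ) : ℂ) • v := by
    have h1 : ∀ q : Multiplicative (bl K r hr) ⧸ hs K r hr e he,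
        (n q : ℂ) • ρ (sS (q.out.toAdd : K)) v = (n q : ℂ) • v := by
      intro q
      rcases hn' q with ⟨h, -⟩ | ⟨-, h⟩
      · rw [h]; simp
      · rw [hv _ (hRε _ h)]
    have h2 : ∀ j : Multiplicative (bl K R hR.le) ⧸ hs K R hR.le d hd, T (j.out.toAdd : K)
      = ∑ q : Multiplicative (bl K r hr) ⧸ hs K r hr e he,
          ψ (-((q.out.toAdd : K) * (j.out.toAdd : K))) • ρ (sS (q.out.toAdd : K)) v := by
      intro j
      refine Finset.sum_congr rfl fun q _ => ?_
      rw [tauS_apply, mul_comm]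
    rw [Finset.sum_congr rfl (fun j _ => h2 j), Finset.sum_comm, Nat.cast_sum, Finset.sum_smul]
    refine Finset.sum_congr rfl fun q _ => ?_
    rw [← Finset.sum_smul, hn, h1]
  have hpos : 0 < ∑ q, n q := by
    have h0 : 0 < n ((1 : Multiplicative (bl K r hr)) : Multiplicative (bl K r hr) ⧸ hs K r hr e he)
        := by
      rcases hn' ((1 : Multiplicative (bl K r hr)) : Multiplicative (bl K r hr) ⧸ hs K r hr e he)
        with ⟨-, b, hb, h⟩ | ⟨h, -⟩
      · exfalso
        have hm : (((1 : Multiplicative (bl K r hr)) :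
          Multiplicative (bl K r hr) ⧸ hs K r hr e he)).out ∈ hs K r hr e he := by
          rw [← QuotientGroup.eq_one_iff, QuotientGroup.out_eq']; rfl
        rw [mem_hs] at hm
        refine h (small _ b (η / R) R (by positivity) (hm.trans (min_le_right _ _)) hb ?_)
        field_simp; exact le_rfl
      · exact h
    exact h0.trans_le (Finset.single_le_sum (f := n) (fun _ _ => Nat.zero_le _) (Finset.mem_univ _))
  have hfix : ρ (sS b₀) (((∑ q, n q : ℕ) : ℂ) • v) = ((∑ q, n q : ℕ) : ℂ) • v := by
    rw [← hsum, map_sum]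
    exact Finset.sum_congr rfl fun j _ => hT0 _ (j.out.toAdd).2
  rw [map_smul] at hfix
  have hne : ((∑ q, n q : ℕ) : ℂ) ≠ 0 := by exact_mod_cast hpos.ne'
  exact smul_right_injective V hne hfix

end Part6

section Part7
open Aff Filter Topology

variable {K : Type*} [NontriviallyNormedField K] [IsUltrametricDist K] [ProperSpace K]
variable {V : Type*} [AddCommGroup V] [Module ℂ V]

lemma smooth_sub {ρ : Rep K V} (hρ : IsSmoothRep ρ) {U : Submodule ℂ V} (hU : GRep.Invariant ρ U) :
    IsSmoothRep (GRep.sub ρ hU) := by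
  intro v
  convert hρ v.1 using 1
  ext g
  exact Subtype.ext_iff

lemma smooth_quot {ρ : Rep K V} (hρ : IsSmoothRep ρ) {U : Submodule ℂ V} (hU : GRep.Invariant ρ U) :
    IsSmoothRep (GRep.quot ρ U hU) := by
  refine smooth_of ?_ ?_
  · intro x
    obtain ⟨v, rfl⟩ := Submodule.Quotient.mk_surjective U x
    filter_upwards [(smooth_T hρ v).mem_nhds (show (1 : Kˣ) ∈ _ from rho_xT_one ρ v)] with u hu
    have hu : ρ (xT u) v = v := hu
    rw [GRep.quot_apply, hu]
  · intro x
    obtain ⟨v, rfl⟩ := Submodule.Quotient.mk_surjective U x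
    obtain ⟨ε, hε, h⟩ := smooth_S hρ v
    refine ⟨ε, hε, fun b hb => ?_⟩
    rw [GRep.quot_apply, h b hb.le]

lemma SRep_Kr (ψ : AddChar K ℂ) (hψlc : IsLocallyConstant (⇑ψ)) (hψne : ψ ≠ 1) (a : K)
    (f : SSx K) {δ : ℝ} (hδ : 0 < δ) (hf : ∀ x : Kˣ, ‖(x : K) - a‖ ≤ δ → f.1 x = 0) :
    ∃ r, f ∈ Kr (SRep ψ hψlc) ψ a r := by
  obtain ⟨y, hy, hy0⟩ := psi_ne ψ hψne
  have hr : 0 ≤ ‖y‖ / δ := by positivity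
  refine ⟨‖y‖ / δ, ?_⟩
  obtain ⟨w, hw, hk⟩ := S_decomp (SRep_smooth ψ hψlc) ψ hψlc a _ hr f
  have h1 : ∀ x : Kˣ, (∃ b : K, ‖b‖ ≤ ‖y‖ / δ ∧ ψ (b * x) ≠ ψ (a * b)) → w.1 x = 0 := by
    rintro x ⟨b, hb, hne⟩
    have h := congrFun (congrArg Subtype.val (hw b hb)) x
    rw [SRep_sS] at h
    have h : ψ (b * x) * w.1 x = ψ (a * b) * w.1 x := h
    by_contra h0
    exact hne (mul_right_cancel₀ h0 h)
  have h2 : ∀ g ∈ Kr (SRep ψ hψlc) ψ a (‖y‖ / δ), ∀ x : Kˣ,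
      (∀ b : K, ‖b‖ ≤ ‖y‖ / δ → ψ (b * x) = ψ (a * b)) → g.1 x = 0 := by
    intro g hg x hx
    induction hg using Submodule.span_induction with
    | mem g hg =>
      obtain ⟨b, v, hb, rfl⟩ := hg
      show (SRep ψ hψlc (sS b) v).1 x - ψ (a * b) * v.1 x = 0
      rw [SRep_sS, hx b hb, sub_self]
    | zero => rfl
    | add g h _ _ hg hh => show g.1 x + h.1 x = 0; rw [hg, hh, add_zero]
    | smul c g _ hg => show c * g.1 x = 0; rw [hg, mul_zero]
  have hw0 : w = 0 := by
    apply Subtype.ext; funext x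
    by_cases hx : ∃ b : K, ‖b‖ ≤ ‖y‖ / δ ∧ ψ (b * x) ≠ ψ (a * b)
    · exact h1 x hx
    · push Not at hx
      have h3 : f.1 x - w.1 x = 0 := h2 _ hk x hx
      have h4 : f.1 x = 0 := by
        apply hf
        by_contra hlt
        push Not at hlt
        have hxa : (x : K) - a ≠ 0 := norm_pos_iff.1 (hδ.trans hlt)
        have hb : ‖y / ((x : K) - a)‖ ≤ ‖y‖ / δ := by
          rw [norm_div]; gcongr
        have h5 := hx _ hb
        apply hy
        have : y = y / ((x : K) - a) * x + -(a * (y / ((x : K) - a))) := by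
          field_simp
          ring
        rw [this, AddChar.map_add_eq_mul, h5, mul_comm, psi_neg_mul]
      rw [h4, zero_sub, neg_eq_zero] at h3
      exact h3
  rw [hw0, sub_zero] at hk
  exact hk

lemma SRep_irr (ψ : AddChar K ℂ) (hψlc : IsLocallyConstant (⇑ψ)) (hψne : ψ ≠ 1)
    {U : Submodule ℂ (SSx K)} (hU : GRep.Invariant (SRep ψ hψlc) U) (hne : U ≠ ⊥) : U = ⊤ := by
  obtain ⟨f, hfU, hf0⟩ := Submodule.exists_mem_ne_zero_of_ne_bot hne
  have : ∃ x, f.1 x ≠ 0 := by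
    by_contra h
    push Not at h
    exact hf0 (Subtype.ext (funext h))
  obtain ⟨x₀, hx₀⟩ := this
  set g := SRep ψ hψlc (xT x₀) f with hg
  have hgU : g ∈ U := hU _ _ hfU
  have hg1 : g.1 1 ≠ 0 := by rw [hg, SRep_xT, one_mul]; exact hx₀
  -- twisted coinvariants of the quotient vanish
  have htw : ∀ h : SSx K, h.1 1 = 0 → h ∈ sTwistKer (SRep ψ hψlc) ψ := by
    intro h h1
    have hop : IsOpen (h.1 ⁻¹' {0}) := h.2.1 _
    have : ∃ δ > 0, ∀ x : Kˣ, ‖(x : K) - 1‖ ≤ δ → h.1 x = 0 := by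
      have hm : h.1 ⁻¹' {0} ∈ 𝓝 (1 : Kˣ) := hop.mem_nhds h1
      rw [Units.isEmbedding_val₀.nhds_eq_comap, mem_comap] at hm
      obtain ⟨t, ht, hts⟩ := hm
      obtain ⟨ε, hε, hb⟩ := Metric.mem_nhds_iff.1 ht
      refine ⟨ε / 2, by positivity, fun x hx => hts (hb ?_)⟩
      rw [mem_ball_iff_norm, Units.val_one]
      linarith
    obtain ⟨δ, hδ, hz⟩ := this
    obtain ⟨r, hr⟩ := SRep_Kr ψ hψlc hψne 1 h hδ hz
    refine (Submodule.span_le.2 ?_ : Kr _ _ _ _ ≤ _) hr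
    rintro w ⟨b, v, -, rfl⟩
    rw [one_mul]
    exact Submodule.subset_span ⟨b, v, rfl⟩
  have hco : ∀ h : SSx K, h ∈ sCoinvKer (SRep ψ hψlc) := by
    intro h
    obtain ⟨δ, hδ, R, hR, hb⟩ := cs_bounds h.2.2
    obtain ⟨r, hr⟩ := SRep_Kr ψ hψlc hψne 0 h (half_pos hδ) (by
      intro x hx
      by_contra h0
      have := (hb x h0).1
      rw [sub_zero] at hx
      linarith)
    refine (Submodule.span_le.2 ?_ : Kr _ _ _ _ ≤ _) hr
    rintro w ⟨b, v, -, rfl⟩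
    rw [zero_mul, AddChar.map_zero_eq_one, one_smul]
    exact Submodule.subset_span ⟨b, v, rfl⟩
  have hQ : sTwistKer (GRep.quot _ U hU) ψ = ⊤ := by
    rw [eq_top_iff]
    rintro x -
    obtain ⟨h, rfl⟩ := Submodule.Quotient.mk_surjective U x
    have h1 : h - (h.1 1 / g.1 1) • g ∈ sTwistKer (SRep ψ hψlc) ψ := by
      apply htw
      show h.1 1 - (h.1 1 / g.1 1) * g.1 1 = 0
      rw [div_mul_cancel₀ _ hg1, sub_self]
    have h2 : (Submodule.Quotient.mk h : SSx K ⧸ U) = U.mkQ (h - (h.1 1 / g.1 1) • g) := by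
      rw [Submodule.mkQ_apply, eq_comm, Submodule.Quotient.eq]
      rw [sub_sub_cancel_left]
      exact U.neg_mem (U.smul_mem _ hgU)
    rw [h2]
    have h3 : sTwistKer (SRep ψ hψlc) ψ ≤ (sTwistKer (GRep.quot _ U hU) ψ).comap U.mkQ := by
      refine Submodule.span_le.2 ?_
      rintro w ⟨b, v, rfl⟩
      exact Submodule.subset_span ⟨b, U.mkQ v, rfl⟩
    exact h3 h1
  have htriv := tw_top (smooth_quot (SRep_smooth ψ hψlc) hU) hψlc hψne hQ
  rw [eq_top_iff]
  rintro h -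
  refine (Submodule.span_le.2 ?_ : sCoinvKer _ ≤ _) (hco h)
  rintro w ⟨b, v, rfl⟩
  have := htriv (Submodule.Quotient.mk v) b
  rw [GRep.quot_apply, Submodule.Quotient.eq] at this
  exact this

lemma iso_S {ρ : Rep K V} (hρ : IsSmoothRep ρ) (ψ : AddChar K ℂ) (hψlc : IsLocallyConstant (⇑ψ))
    (hψne : ψ ≠ 1) (hirr : GRep.Irred ρ) (hS : ¬ ∀ b v, ρ (sS b) v = v) :
    GRep.Iso ρ (SRep ψ hψlc) := by
  have htw : sTwistKer ρ ψ ≠ ⊤ := fun h => hS fun b v => tw_top hρ hψlc hψne h v b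
  obtain ⟨l, hl0, hl⟩ := Submodule.exists_le_ker_of_lt_top _ (lt_top_iff_ne_top.2 htw)
  have hlS : ∀ b v, l (ρ (sS b) v) = ψ b * l v := by
    intro b v
    have : ρ (sS b) v - ψ b • v ∈ sTwistKer ρ ψ := Submodule.subset_span ⟨b, v, rfl⟩
    have := hl this
    rw [LinearMap.mem_ker, map_sub, map_smul, sub_eq_zero] at this
    exact this
  have hco : sCoinvKer ρ = ⊤ := by
    rcases hirr.2 _ (sCoinvKer_invariant ρ) with h | h
    · exfalso
      apply hS
      intro b v
      have : ρ (sS b) v - v ∈ sCoinvKer ρ := Submodule.subset_span ⟨b, v, rfl⟩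
      rw [h, Submodule.mem_bot, sub_eq_zero] at this
      exact this
    · exact h
  obtain ⟨y, hy, hy0⟩ := psi_ne ψ hψne
  obtain ⟨η, hη, hη1⟩ := psi_small ψ hψlc
  have hsmall : ∀ v, ∃ δ > 0, ∀ x : Kˣ, ‖(x : K)‖ < δ → l (ρ (xT x) v) = 0 := by
    intro v
    have hv : v ∈ sCoinvKer ρ := hco ▸ Submodule.mem_top
    induction hv using Submodule.span_induction with
    | mem w hw =>
      obtain ⟨b, v, rfl⟩ := hw
      refine ⟨η / (‖b‖ + 1), by positivity, fun x hx => ?_⟩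
      rw [lt_div_iff₀ (by positivity)] at hx
      rw [map_sub, rho_comm, map_sub, hlS, hη1, one_mul, sub_self]
      rw [norm_mul]
      nlinarith [norm_nonneg (x : K)]
    | zero => exact ⟨1, one_pos, fun x _ => by simp⟩
    | add v w _ _ hv hw =>
      obtain ⟨δ, hδ, h⟩ := hv
      obtain ⟨δ', hδ', h'⟩ := hw
      refine ⟨min δ δ', lt_min hδ hδ', fun x hx => ?_⟩
      rw [map_add, map_add, h x (hx.trans_le (min_le_left _ _)),
        h' x (hx.trans_le (min_le_right _ _)), add_zero]
    | smul c v _ hv =>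
      obtain ⟨δ, hδ, h⟩ := hv
      exact ⟨δ, hδ, fun x hx => by rw [map_smul, map_smul, h x hx, smul_zero]⟩
  have hlarge : ∀ v, ∃ R, ∀ x : Kˣ, R < ‖(x : K)‖ → l (ρ (xT x) v) = 0 := by
    intro v
    obtain ⟨ε, hε, h⟩ := smooth_S hρ v
    refine ⟨‖y‖ / ε, fun x hx => ?_⟩
    rw [div_lt_iff₀ hε] at hx
    have hx0 : (0 : ℝ) < ‖(x : K)‖ := norm_pos_iff.2 x.ne_zero
    have h1 := h ((x⁻¹ : Kˣ) * y) (by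
      rw [norm_mul, Units.val_inv_eq_inv_val, norm_inv, inv_mul_le_iff₀ hx0]
      exact hx.le)
    have h2 := hlS y (ρ (xT x) v)
    have h3 := rho_comm ρ x ((x⁻¹ : Kˣ) * y) v
    rw [h1, Units.mul_inv_cancel_left] at h3
    rw [← h3] at h2
    by_contra h0
    exact hy (mul_right_cancel₀ h0 (by rw [← h2, one_mul]))
  have hmem : ∀ v, (fun x : Kˣ => l (ρ (xT x) v)) ∈ SSx K := by
    intro v
    refine ⟨(orb_lc hρ v).comp l, ?_⟩
    obtain ⟨δ, hδ, h⟩ := hsmall v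
    obtain ⟨R, h'⟩ := hlarge v
    refine cs_of_bounds (R := R) hδ fun x hx => ⟨?_, ?_⟩
    · by_contra h1; exact hx (h x (not_le.1 h1))
    · by_contra h1; exact hx (h' x (not_le.1 h1))
  let Φ : V →ₗ[ℂ] SSx K :=
    { toFun := fun v => ⟨_, hmem v⟩
      map_add' := fun v w => by
        apply Subtype.ext; funext x
        show l (ρ (xT x) (v + w)) = l (ρ (xT x) v) + l (ρ (xT x) w)
        rw [map_add, map_add]
      map_smul' := fun c v => by
        apply Subtype.ext; funext x
        show l (ρ (xT x) (c • v)) = c * l (ρ (xT x) v)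
        rw [map_smul, map_smul]; rfl }
  have hΦ : ∀ v x, (Φ v).1 x = l (ρ (xT x) v) := fun v x => rfl
  have heq : GRep.Equivariant ρ (SRep ψ hψlc) Φ := by
    intro g v
    apply Subtype.ext; funext x
    rw [SRep_coe, hΦ, hΦ, rho_decomp ρ g v, ← rho_xT_mul, rho_comm, hlS]
    congr 2
    rw [Units.val_mul, mul_assoc, Units.mul_inv_cancel_left, mul_comm]
  have hΦ0 : ∃ v, Φ v ≠ 0 := by
    by_contra h
    push Not at h
    apply hl0
    apply LinearMap.ext; intro v
    have := congrFun (congrArg Subtype.val (h v)) 1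
    rw [hΦ, rho_xT_one] at this
    exact this
  obtain ⟨v₀, hv₀⟩ := hΦ0
  have hinj : Function.Injective Φ := by
    rw [← LinearMap.ker_eq_bot]
    refine (hirr.2 _ (GRep.ker_invariant _ _ Φ heq)).resolve_right fun h => hv₀ ?_
    have : v₀ ∈ LinearMap.ker Φ := h ▸ Submodule.mem_top
    exact this
  have hsur : Function.Surjective Φ := by
    rw [← LinearMap.range_eq_top]
    refine SRep_irr ψ hψlc hψne (GRep.range_invariant _ _ Φ heq) fun h => hv₀ ?_
    have : Φ v₀ ∈ LinearMap.range Φ := ⟨v₀, rfl⟩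
    rw [h] at this
    exact this
  exact ⟨LinearEquiv.ofBijective Φ ⟨hinj, hsur⟩, heq⟩

lemma not_iso_S {ρ : Rep K V} (ψ : AddChar K ℂ) (hψlc : IsLocallyConstant (⇑ψ))
    (hψne : ψ ≠ 1) (hirr : GRep.Irred ρ) (hS : ∀ b v, ρ (sS b) v = v) :
    ¬ GRep.Iso ρ (SRep ψ hψlc) := by
  rintro ⟨e, he⟩
  obtain ⟨v, hv⟩ := @exists_ne V hirr.1 0
  apply hv
  apply e.injective
  rw [map_zero]
  refine SRep_sInv ψ hψlc hψne fun b => ?_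
  rw [← he, hS]

lemma repIdx_irr {ρ : Rep K V} (hρ : IsSmoothRep ρ) (ψ : AddChar K ℂ)
    (hψlc : IsLocallyConstant (⇑ψ)) (hψne : ψ ≠ 1) (hirr : GRep.Irred ρ) {χ : Kˣ →* ℂˣ}
    (hχ : SmoothMulChar χ) : RepIdx ρ χ (if GRep.Iso ρ (SRep ψ hψlc) then 1 else 0) := by
  by_cases hS : ∀ b v, ρ (sS b) v = v
  · rw [if_neg (not_iso_S ψ hψlc hψne hirr hS)]
    haveI := (triv_irred hρ hS hirr).1
    exact repIdx_fd hρ hχ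
  · have := iso_S hρ ψ hψlc hψne hirr hS
    rw [if_pos this]
    exact repIdx_iso this (repIdx_S ψ hψlc hψne hχ)

end Part7

section Part8
open Aff

variable {K : Type*} [NontriviallyNormedField K] [IsUltrametricDist K] [ProperSpace K]
variable {V : Type*} [AddCommGroup V] [Module ℂ V]

lemma irr_subquot {ρ : Rep K V} {A B : Submodule ℂ V} (hA : GRep.Invariant ρ A)
    (hB : GRep.Invariant ρ B) (hlt : A < B)
    (hmax : ∀ C : Submodule ℂ V, GRep.Invariant ρ C → A ≤ C → C ≤ B → C = A ∨ C = B) :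
    GRep.Irred (GRep.subquot ρ hA hB) := by
  obtain ⟨hle, x, hxB, hxA⟩ := SetLike.lt_iff_le_and_exists.1 hlt
  refine ⟨⟨Submodule.Quotient.mk ⟨x, hxB⟩, 0, ?_⟩, ?_⟩
  · rw [Ne, Submodule.Quotient.mk_eq_zero]
    exact hxA
  intro U hU
  let p := A.comap B.subtype
  set C : Submodule ℂ V := (U.comap p.mkQ).map B.subtype with hC
  have hCm : ∀ (z : B), z.1 ∈ C ↔ p.mkQ z ∈ U := by
    intro z
    constructor
    · rintro ⟨w, hw, hwz⟩
      have : w = z := Subtype.ext hwz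
      exact this ▸ hw
    · intro h
      exact ⟨z, h, rfl⟩
  have hCB : C ≤ B := by
    rintro z ⟨w, -, rfl⟩
    exact w.2
  have hCi : GRep.Invariant ρ C := by
    rintro g z ⟨w, hw, rfl⟩
    refine ⟨GRep.sub ρ hB g w, hU g _ hw, rfl⟩
  have hAC : A ≤ C := by
    intro z hz
    refine (hCm ⟨z, hle hz⟩).2 ?_
    have : p.mkQ ⟨z, hle hz⟩ = 0 := by
      rw [Submodule.mkQ_apply, Submodule.Quotient.mk_eq_zero]
      exact hz
    rw [this]
    exact U.zero_mem
  rcases hmax C hCi hAC hCB with h | h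
  · left
    rw [eq_bot_iff]
    intro u hu
    obtain ⟨z, rfl⟩ := Submodule.Quotient.mk_surjective _ u
    have h1 := (hCm z).2 hu
    rw [h] at h1
    exact (Submodule.Quotient.mk_eq_zero _).2 h1
  · right
    rw [eq_top_iff]
    rintro u -
    obtain ⟨z, rfl⟩ := Submodule.Quotient.mk_surjective _ u
    have h1 : z.1 ∈ C := by rw [h]; exact z.2
    exact (hCm z).1 h1

lemma repIdx_step {ρ : Rep K V} (hρ : IsSmoothRep ρ) {A B : Submodule ℂ V}
    (hA : GRep.Invariant ρ A) (hB : GRep.Invariant ρ B) (hle : A ≤ B) {χ : Kˣ →* ℂˣ}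
    (hχ : SmoothMulChar χ) {m n : ℕ} (h1 : RepIdx (GRep.sub ρ hA) χ m)
    (h2 : RepIdx (GRep.subquot ρ hA hB) χ n) : RepIdx (GRep.sub ρ hB) χ (m + n) := by
  refine repIdx_add (smooth_sub hρ hA) (smooth_sub hρ hB) (smooth_quot (smooth_sub hρ hB) _)
    (Submodule.inclusion hle) (A.comap B.subtype).mkQ (Submodule.inclusion_injective hle)
    (Submodule.mkQ_surjective _) ?_ (fun g v => rfl) (fun g v => rfl) hχ h1 h2
  intro z
  rw [Submodule.mkQ_apply, Submodule.Quotient.mk_eq_zero]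
  constructor
  · intro hz
    exact ⟨⟨z.1, hz⟩, rfl⟩
  · rintro ⟨w, rfl⟩
    exact w.2

lemma repIdx_series (ψ : AddChar K ℂ) (hψlc : IsLocallyConstant (⇑ψ)) (hψne : ψ ≠ 1)
    {ρ : Rep K V} (hρ : IsSmoothRep ρ) (c : CompSeries ρ) {χ : Kˣ →* ℂˣ} (hχ : SmoothMulChar χ) :
    RepIdx ρ χ (c.deg (SRep ψ hψlc)) := by
  have key : ∀ i ≤ c.n, RepIdx (GRep.sub ρ (c.inv i)) χ (∑ j ∈ Finset.range i,
      if GRep.Iso (GRep.subquot ρ (c.inv j) (c.inv (j + 1))) (SRep ψ hψlc) then 1 else 0) := by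
    intro i
    induction i with
    | zero =>
      intro _
      rw [Finset.sum_range_zero]
      haveI : Module.Finite ℂ (c.W 0) := by rw [c.bot]; infer_instance
      exact repIdx_fd (smooth_sub hρ _) hχ
    | succ i ih =>
      intro hi
      rw [Finset.sum_range_succ]
      refine repIdx_step hρ (c.inv i) (c.inv (i + 1)) (c.lt i hi).le hχ (ih (by omega)) ?_
      exact repIdx_irr (smooth_quot (smooth_sub hρ _) _) ψ hψlc hψne
        (irr_subquot (c.inv i) (c.inv (i + 1)) (c.lt i hi) (c.maximal i hi)) hχ
  have h := key c.n le_rfl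
  have hd : c.deg (SRep ψ hψlc) = ∑ j ∈ Finset.range c.n,
      if GRep.Iso (GRep.subquot ρ (c.inv j) (c.inv (j + 1))) (SRep ψ hψlc) then 1 else 0 := by
    rw [Finset.sum_range, CompSeries.deg, Finset.card_filter]
  rw [hd]
  refine repIdx_iso ?_ h
  exact ⟨(LinearEquiv.ofTop _ c.top).symm, fun g v => rfl⟩

lemma sInv_eig {ρ : Rep K V} (hρ : IsSmoothRep ρ) (c : CompSeries ρ) (hP : Perfect ρ) :
    sInv ρ = ⊥ := by
  have key : ∀ i ≤ c.n, c.W i ⊓ sInv ρ = ⊥ := by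
    intro i
    induction i with
    | zero => intro _; rw [c.bot, bot_inf_eq]
    | succ i ih =>
      intro hi
      have h0 := ih (by omega)
      by_contra hne
      have hinv : GRep.Invariant ρ (c.W (i + 1) ⊓ sInv ρ) := fun g v hv =>
        ⟨c.inv _ g v hv.1, sInv_invariant ρ g v hv.2⟩
      have hD : ∀ D : Submodule ℂ V, GRep.Invariant ρ D → D ≤ c.W (i + 1) ⊓ sInv ρ → D ≠ ⊥ →
          D = c.W (i + 1) ⊓ sInv ρ := by
        intro D hDi hDle hD0
        have hsup : GRep.Invariant ρ (c.W i ⊔ D) := by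
          intro g v hv
          obtain ⟨a, ha, d, hd, rfl⟩ := Submodule.mem_sup.1 hv
          rw [map_add]
          exact Submodule.add_mem_sup (c.inv i g a ha) (hDi g d hd)
        rcases c.maximal i hi _ hsup le_sup_left
          (sup_le (c.lt i hi).le (hDle.trans inf_le_left)) with h | h
        · exfalso
          apply hD0
          rw [eq_bot_iff, ← h0]
          exact le_inf (h ▸ le_sup_right) (hDle.trans inf_le_right)
        · apply le_antisymm hDle
          intro v hv
          have hv1 : v ∈ c.W i ⊔ D := h ▸ hv.1
          obtain ⟨a, ha, d, hd, rfl⟩ := Submodule.mem_sup.1 hv1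
          have : a ∈ c.W i ⊓ sInv ρ := by
            refine ⟨ha, ?_⟩
            have := (sInv ρ).sub_mem hv.2 (hDle hd).2
            rwa [add_sub_cancel_right] at this
          rw [h0, Submodule.mem_bot] at this
          rw [this, zero_add]
          exact hd
      have hirr : GRep.Irred (GRep.sub ρ hinv) := by
        refine ⟨Submodule.nontrivial_iff_ne_bot.2 hne, fun U hU => ?_⟩
        by_cases hU0 : U = ⊥
        · exact Or.inl hU0
        right
        have h1 := hD (U.map (Submodule.subtype _)) (by
          rintro g z ⟨w, hw, rfl⟩
          exact ⟨GRep.sub ρ hinv g w, hU g w hw, rfl⟩) (Submodule.map_subtype_le _ _) (by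
          intro h
          apply hU0
          rw [eq_bot_iff]
          intro u hu
          have : u.1 ∈ U.map (Submodule.subtype _) := ⟨u, hu, rfl⟩
          rw [h] at this
          exact Subtype.ext this)
        rw [eq_top_iff]
        rintro u -
        have h2 : u.1 ∈ U.map (Submodule.subtype _) := by rw [h1]; exact u.2
        obtain ⟨w, hw, hwu⟩ := h2
        have : w = u := Subtype.ext hwu
        exact this ▸ hw
      obtain ⟨-, χ, hχ, v, hv0, hv⟩ := triv_irred (smooth_sub hρ hinv)
        (fun b v => Subtype.ext (v.2.2 b)) hirr
      apply hv0
      have : v.1 ∈ tEigen ρ χ := fun u => congrArg Subtype.val (hv u)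
      rw [hP χ hχ] at this
      exact Subtype.ext this
  have := key c.n le_rfl
  rwa [c.top, top_inf_eq] at this

end Part8

section Statements

open Aff

variable {K : Type*} [NontriviallyNormedField K] [IsUltrametricDist K] [ProperSpace K]

theorem statement8
    (hchar : (2 : K) ≠ 0)
    (ψ : AddChar K ℂ) (hψlc : IsLocallyConstant (⇑ψ)) (hψne : ψ ≠ 1)
    {V : Type*} [AddCommGroup V] [Module ℂ V]
    (ρ : Rep K V) (hρ : IsSmoothRep ρ) (c : CompSeries ρ) :
    (Perfect ρ ↔ sInv ρ = ⊥) ∧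
    (Perfect ρ ↔ ∀ χ : Kˣ →* ℂˣ, SmoothMulChar χ →
      Module.Finite ℂ (V ⧸ tTwistKer ρ χ) ∧
      Module.finrank ℂ (V ⧸ tTwistKer ρ χ) = c.deg (SRep ψ hψlc)) := by
  refine ⟨⟨sInv_eig hρ c, fun h χ hχ => ?_⟩, ⟨fun h χ hχ => ?_, fun h χ hχ => ?_⟩⟩
  · rw [eq_bot_iff, ← h]
    exact fun v hv => eigen_sInv hρ hv
  · obtain ⟨-, h2, h3⟩ := repIdx_series ψ hψlc hψne hρ c hχ
    refine ⟨h2, ?_⟩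
    rw [h3, h χ hχ, finrank_bot, zero_add]
  · obtain ⟨h1, h2, h3⟩ := repIdx_series ψ hψlc hψne hρ c hχ
    have h4 := (h χ hχ).2
    exact Submodule.finrank_eq_zero.1 (by omega)

end Statements

end PSW
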